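/- Let G be a cactus with n vertices, k cycles and m edges, with m > 15 and m > 4k, such that G is not the bundle C_1(n,k) of k quadrangles. Then Sz*_e(G) ≥ (2m² + 3m + 4k(6m−15) − 8)/4 if m ≥ 20, with equality iff G ≅ G*_1 (bundle of k quadrangles with a path of length 2 pendant at the common vertex plus remaining pendant edges); and Sz*_e(G) ≥ (3m² − 19m + 4k(6m−15) + 45)/4 if 15 < m ≤ 19, with equality iff G is the bundle of one triangle and k−1 quadrangles. -/

import Mathlib

open scoped Classical
open Finset

noncomputable def eDist {V : Type*} (G : SimpleGraph V) (f : Sym2 V) (w : V) : ℕ :=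
  Sym2.lift ⟨fun a b => min (G.dist a w) (G.dist b w), fun _ _ => min_comm _ _⟩ f

noncomputable def mCloser {V : Type*} (G : SimpleGraph V) [Fintype V] (u v : V) : ℕ :=
  (G.edgeFinset.filter fun f => eDist G f u < eDist G f v).card

noncomputable def mEqui {V : Type*} (G : SimpleGraph V) [Fintype V] (u v : V) : ℕ :=
  (G.edgeFinset.filter fun f => eDist G f u = eDist G f v).card

/-- The edge revised Szeged index (each edge `uv` is counted once; the double sum over
ordered adjacent pairs counts it twice, whence the division by 2). -/
noncomputable def szRevE {V : Type*} (G : SimpleGraph V) [Fintype V] : ℚ :=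
  (∑ u : V, ∑ v : V, if G.Adj u v then
      ((mCloser G u v : ℚ) + (mEqui G u v : ℚ) / 2) *
        ((mCloser G v u : ℚ) + (mEqui G u v : ℚ) / 2)
    else 0) / 2

/-- The edges of `G` lying in the connected component `c`. -/
noncomputable def compEdges {V : Type*} (G : SimpleGraph V) [Fintype V]
    (c : G.ConnectedComponent) : Finset (Sym2 V) :=
  G.edgeFinset.filter fun f => ∀ x ∈ f, G.connectedComponentMk x = c

/-- A cactus: a connected graph in which any two (edge-)distinct cycles share
at most one vertex. -/
def IsCactus {V : Type*} (G : SimpleGraph V) : Prop :=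
  G.Connected ∧ ∀ ⦃a b : V⦄ (p : G.Walk a a) (q : G.Walk b b),
    p.IsCycle → q.IsCycle → p.edges.toFinset ≠ q.edges.toFinset →
    (p.support.toFinset ∩ q.support.toFinset).card ≤ 1

/-- The bundle `G(len 0, …, len (k-1))`: `k` cycles of the given lengths all sharing a single
common hub vertex, together with `p` pendant edges attached at the hub. -/
def bundleGraph (k : ℕ) (len : Fin k → ℕ) (p : ℕ) :
    SimpleGraph (Unit ⊕ ((Σ i : Fin k, Fin (len i - 1)) ⊕ Fin p)) :=
  SimpleGraph.fromRel fun x y =>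
    match x, y with
    | Sum.inl _, Sum.inr (Sum.inr _) => True
    | Sum.inl _, Sum.inr (Sum.inl ⟨i, a⟩) => a.val = 0 ∨ a.val = len i - 2
    | Sum.inr (Sum.inl ⟨i, a⟩), Sum.inr (Sum.inl ⟨j, b⟩) => i = j ∧ a.val + 1 = b.val
    | _, _ => False

/-- `G*₁`: the bundle of `k` quadrangles on a hub, `n - 3k - 3` pendant edges at the hub,
and a pendant path of length 2 at the hub (i.e. `C₁(n-1,k)` with a pendant edge attached
to one of its pendant vertices). -/
def GStar1 (n k : ℕ) :
    SimpleGraph (Unit ⊕ ((Σ _ : Fin k, Fin 3) ⊕ (Fin (n - 3 * k - 3) ⊕ Fin 2))) :=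
  SimpleGraph.fromRel fun x y =>
    match x, y with
    | Sum.inl _, Sum.inr (Sum.inr (Sum.inl _)) => True
    | Sum.inl _, Sum.inr (Sum.inr (Sum.inr b)) => b.val = 0
    | Sum.inr (Sum.inr (Sum.inr a)), Sum.inr (Sum.inr (Sum.inr b)) => a.val = 0 ∧ b.val = 1
    | Sum.inl _, Sum.inr (Sum.inl ⟨_, a⟩) => a.val = 0 ∨ a.val = 2
    | Sum.inr (Sum.inl ⟨i, a⟩), Sum.inr (Sum.inl ⟨j, b⟩) => i = j ∧ a.val + 1 = b.val
    | _, _ => False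

/-!
With `d(uv) = m_u - m_v`, four times the index is the sum over the edges of the weights
`m² - d(e)²`. An edge weighs at least `2m - 1`, the weight of a pendant edge, and the edges of a
quadrangle attached to the rest of the graph at one vertex weigh `24m - 60` more than that baseline
altogether. The edge set of a cactus is the disjoint union of its bridges and its `k` cycles, so the
weights sum to `m (2m - 1) + k (24m - 60)` plus the excesses of the bridges over pendant edges and
of the cycles over end quadrangles.

No excess is negative for `m > 15`, and the bridges and cycles other than the pendant edges and end
quadrangles have excess at least `4 (m - 2)`, attained by pendant paths of length two, or at least
`(m - 3) (m - 15)`, attained by end triangles. The second bound is the smaller one exactly for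
`m ≤ 19`. A graph with no exceptional piece is the excluded bundle. In the case of equality there
is exactly one, and as `m > 4k` leaves a bridge, whose endpoint is the common vertex at which
everything else has to be attached, this determines the graph.
-/

/-- The number of edges, as an integer so that it can be subtracted. -/
local notation "e(" G ")" => (#(SimpleGraph.edgeFinset G) : ℤ)

section Weights

variable {V : Type*} [Fintype V] {G : SimpleGraph V} {u v : V}

/-- The difference `m_u(uv) - m_v(uv)`, for an arbitrary pair of vertices `u`, `v`. -/
noncomputable def closerDiff (G : SimpleGraph V) (u v : V) : ℤ :=
  mCloser G u v - mCloser G v u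

theorem closerDiff_swap (G : SimpleGraph V) (u v : V) : closerDiff G v u = -closerDiff G u v :=
  (neg_sub _ _).symm

/-- Four times the summand of `szRevE` at an edge `uv`. It is written as `m² - (m_u - m_v)²`, which
is `(2 m_u + m_0) (2 m_v + m_0)` because `m_u + m_v + m_0 = m`. -/
noncomputable def edgeWeight (G : SimpleGraph V) : Sym2 V → ℤ :=
  Sym2.lift ⟨fun u v => e(G) ^ 2 - closerDiff G u v ^ 2, fun u v => by
    simp only [closerDiff_swap G u v, neg_sq]⟩

theorem edgeWeight_mk (G : SimpleGraph V) (u v : V) :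
    edgeWeight G s(u, v) = e(G) ^ 2 - closerDiff G u v ^ 2 := rfl

theorem mCloser_add_mCloser_add_mEqui (G : SimpleGraph V) (u v : V) :
    mCloser G u v + mCloser G v u + mEqui G u v = #G.edgeFinset := by
  unfold mCloser mEqui
  rw [card_filter, card_filter, card_filter, ← sum_add_distrib, ← sum_add_distrib,
    card_eq_sum_ones]
  refine sum_congr rfl fun f _ => ?_
  rcases lt_trichotomy (eDist G f u) (eDist G f v) with h | h | h
  · simp [h, h.ne, h.not_gt]
  · simp [h]
  · simp [h, h.ne', h.not_gt]

theorem four_mul_eq_edgeWeight (G : SimpleGraph V) (u v : V) :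
    4 * (((mCloser G u v : ℚ) + (mEqui G u v : ℚ) / 2) *
      ((mCloser G v u : ℚ) + (mEqui G u v : ℚ) / 2)) = edgeWeight G s(u, v) := by
  rw [edgeWeight_mk, closerDiff, ← mCloser_add_mCloser_add_mEqui G u v]
  push_cast
  ring

theorem sum_sum_ite_adj_eq_two_mul_sum_edgeFinset (G : SimpleGraph V) (F : Sym2 V → ℚ) :
    (∑ u, ∑ v, if G.Adj u v then F s(u, v) else 0) = 2 * ∑ e ∈ G.edgeFinset, F e := by
  have darts : (∑ u, ∑ v, if G.Adj u v then F s(u, v) else 0) = ∑ d : G.Dart, F d.edge := by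
    rw [← sum_product' (f := fun u v => if G.Adj u v then F s(u, v) else 0), ← sum_filter]
    exact (sum_bij' (fun d _ => (d.fst, d.snd)) (fun p hp => ⟨p, (mem_filter.1 hp).2⟩)
      (by simp) (by simp) (by simp) (by simp) fun _ _ => rfl).symm
  rw [darts, ← sum_fiberwise_of_maps_to (t := G.edgeFinset) (g := SimpleGraph.Dart.edge)
    fun d _ => SimpleGraph.mem_edgeFinset.2 d.edge_mem, mul_sum]
  refine sum_congr rfl fun e he => ?_
  rw [sum_congr rfl fun d hd => congrArg F (mem_filter.1 hd).2, sum_const,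
    G.dart_edge_fiber_card e (SimpleGraph.mem_edgeFinset.1 he), two_nsmul, two_mul]

theorem szRevE_eq_sum_edgeWeight (G : SimpleGraph V) :
    szRevE G = (∑ e ∈ G.edgeFinset, edgeWeight G e : ℤ) / 4 := by
  have summand (u v : V) : ((mCloser G u v : ℚ) + (mEqui G u v : ℚ) / 2) *
      ((mCloser G v u : ℚ) + (mEqui G u v : ℚ) / 2) = edgeWeight G s(u, v) / 4 := by
    rw [← four_mul_eq_edgeWeight]
    ring
  simp only [szRevE, summand]
  rw [sum_sum_ite_adj_eq_two_mul_sum_edgeFinset G fun e => (edgeWeight G e : ℚ) / 4, ← sum_div]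
  push_cast
  ring

theorem edgeWeight_nonneg (G : SimpleGraph V) (e : Sym2 V) : 0 ≤ edgeWeight G e := by
  induction e with | h u v
  have h := mCloser_add_mCloser_add_mEqui G u v
  rw [edgeWeight_mk, sub_nonneg, sq_le_sq, Nat.abs_cast, abs_le, closerDiff]
  omega

theorem abs_closerDiff_le {b q : ℕ} (hu : b ≤ mCloser G u v) (hv : b ≤ mCloser G v u)
    (hq : q ≤ mEqui G u v) : |closerDiff G u v| ≤ e(G) - q - 2 * b := by
  have h := mCloser_add_mCloser_add_mEqui G u v
  rw [closerDiff, abs_le]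
  omega

theorem le_edgeWeight {b q : ℕ} (hu : b ≤ mCloser G u v) (hv : b ≤ mCloser G v u)
    (hq : q ≤ mEqui G u v) :
    e(G) ^ 2 - (e(G) - q - 2 * b) ^ 2 ≤ edgeWeight G s(u, v) := by
  have h := abs_closerDiff_le hu hv hq
  rw [edgeWeight_mk, sub_le_sub_iff_left, sq_le_sq]
  exact h.trans (le_abs_self _)

end Weights

section EdgeDistance

variable {V : Type*} {G : SimpleGraph V} {u v w : V} {e f g : Sym2 V}

theorem eDist_mk (G : SimpleGraph V) (u v w : V) :
    eDist G s(u, v) w = min (G.dist u w) (G.dist v w) := rfl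

theorem eDist_eq_zero_iff (hG : G.Connected) : eDist G e w = 0 ↔ w ∈ e := by
  induction e with | h u v
  rw [eDist_mk, ← Nat.le_zero, min_le_iff, Nat.le_zero, Nat.le_zero, hG.dist_eq_zero_iff,
    hG.dist_eq_zero_iff, Sym2.mem_iff, eq_comm, @eq_comm _ w v]

theorem eDist_le_dist (hu : u ∈ e) (w : V) : eDist G e w ≤ G.dist u w := by
  induction e with | h x y
  rw [eDist_mk]
  rcases Sym2.mem_iff.1 hu with rfl | rfl
  exacts [min_le_left _ _, min_le_right _ _]

theorem exists_mem_eDist_eq_dist (G : SimpleGraph V) (e : Sym2 V) (w : V) :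
    ∃ u ∈ e, eDist G e w = G.dist u w := by
  induction e with | h x y
  rw [eDist_mk]
  rcases min_choice (G.dist x w) (G.dist y w) with h | h
  exacts [⟨x, Sym2.mem_mk_left x y, h⟩, ⟨y, Sym2.mem_mk_right x y, h⟩]

theorem eDist_lt_of_mem_of_notMem (hG : G.Connected) (hu : u ∈ e) (hv : v ∉ e) :
    eDist G e u < eDist G e v := by
  rw [(eDist_eq_zero_iff hG).2 hu]
  exact Nat.pos_of_ne_zero (mt (eDist_eq_zero_iff hG).1 hv)

theorem eDist_eq_one_of_adj (hG : G.Connected) (hu : u ∈ e) (hw : w ∉ e) (h : G.Adj u w) :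
    eDist G e w = 1 :=
  le_antisymm ((eDist_le_dist hu w).trans (SimpleGraph.dist_eq_one_iff_adj.2 h).le)
    (Nat.pos_of_ne_zero (mt (eDist_eq_zero_iff hG).1 hw))

theorem two_le_eDist (hG : G.Connected) (hw : w ∉ e) (h : ∀ u ∈ e, ¬G.Adj u w) :
    2 ≤ eDist G e w := by
  obtain ⟨u, hu, hd⟩ := exists_mem_eDist_eq_dist G e w
  rw [hd]
  have h0 : G.dist u w ≠ 0 := mt hG.dist_eq_zero_iff.1 fun h => hw (h ▸ hu)
  have h1 : G.dist u w ≠ 1 := mt SimpleGraph.dist_eq_one_iff_adj.1 (h u hu)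
  omega

theorem eDist_lt_of_adj (hG : G.Connected) (hw : w ∈ e) (hwu : G.Adj w u) (hv : v ∉ e)
    (h : ∀ x ∈ e, ¬G.Adj x v) : eDist G e u < eDist G e v :=
  calc eDist G e u ≤ G.dist w u := eDist_le_dist hw u
    _ = 1 := SimpleGraph.dist_eq_one_iff_adj.2 hwu
    _ < eDist G e v := two_le_eDist hG hv h

theorem eDist_le_eDist_add_one (hG : G.Connected) (h : G.Adj u v) (e : Sym2 V) :
    eDist G e u ≤ eDist G e v + 1 := by
  obtain ⟨x, hx, hd⟩ := exists_mem_eDist_eq_dist G e v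
  calc eDist G e u ≤ G.dist x u := eDist_le_dist hx u
    _ ≤ G.dist x v + G.dist v u := hG.dist_triangle
    _ = eDist G e v + 1 := by rw [hd, SimpleGraph.dist_eq_one_iff_adj.2 h.symm]

variable [Fintype V]

theorem one_le_mCloser (he : e ∈ G.edgeSet) (h : eDist G e u < eDist G e v) :
    1 ≤ mCloser G u v :=
  card_pos.2 ⟨e, mem_filter.2 ⟨SimpleGraph.mem_edgeFinset.2 he, h⟩⟩

theorem two_le_mCloser (hne : f ≠ g) (hf : f ∈ G.edgeSet) (hf' : eDist G f u < eDist G f v)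
    (hg : g ∈ G.edgeSet) (hg' : eDist G g u < eDist G g v) : 2 ≤ mCloser G u v :=
  one_lt_card.2 ⟨f, mem_filter.2 ⟨SimpleGraph.mem_edgeFinset.2 hf, hf'⟩,
    g, mem_filter.2 ⟨SimpleGraph.mem_edgeFinset.2 hg, hg'⟩, hne⟩

theorem one_le_mEqui (hG : G.Connected) (h : G.Adj u v) : 1 ≤ mEqui G u v :=
  card_pos.2 ⟨s(u, v), mem_filter.2 ⟨SimpleGraph.mem_edgeFinset.2 h, by
    rw [(eDist_eq_zero_iff hG).2 (Sym2.mem_mk_left u v),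
      (eDist_eq_zero_iff hG).2 (Sym2.mem_mk_right u v)]⟩⟩

theorem two_le_mEqui_of_quadrangle (hG : G.Connected) {a b c d : V} (hab : G.Adj a b)
    (hbc : G.Adj b c) (hcd : G.Adj c d) (hda : G.Adj d a) (hac : a ≠ c) (hbd : b ≠ d) :
    2 ≤ mEqui G a b := by
  have ha : a ∉ s(c, d) := by simp [hac, hda.ne']
  have hb : b ∉ s(c, d) := by simp [hbc.ne, hbd]
  refine one_lt_card.2 ⟨s(a, b), mem_filter.2 ⟨SimpleGraph.mem_edgeFinset.2 hab, ?_⟩, s(c, d),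
    mem_filter.2 ⟨SimpleGraph.mem_edgeFinset.2 hcd, ?_⟩,
    fun h => ha (h ▸ Sym2.mem_mk_left a b)⟩
  · rw [(eDist_eq_zero_iff hG).2 (Sym2.mem_mk_left a b),
      (eDist_eq_zero_iff hG).2 (Sym2.mem_mk_right a b)]
  · rw [eDist_eq_one_of_adj hG (Sym2.mem_mk_right c d) ha hda,
      eDist_eq_one_of_adj hG (Sym2.mem_mk_left c d) hb hbc.symm]

theorem two_mul_sub_one_le_edgeWeight (hG : G.Connected) (h : G.Adj u v) :
    2 * e(G) - 1 ≤ edgeWeight G s(u, v) := by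
  have := le_edgeWeight (Nat.zero_le _) (Nat.zero_le _) (one_le_mEqui hG h)
  push_cast at this
  linarith

theorem one_le_mCloser_of_adj (hG : G.Connected) (huv : G.Adj u v) (huw : G.Adj u w)
    (hwv : w ≠ v) : 1 ≤ mCloser G u v :=
  one_le_mCloser huw (eDist_lt_of_mem_of_notMem hG (Sym2.mem_mk_left u w)
    (by simp [huv.ne', hwv.symm]))

end EdgeDistance

section Cycles

variable {V : Type*} {G : SimpleGraph V} {a x y z : V} {p : G.Walk a a} {C : Finset (Sym2 V)}
  {e : Sym2 V}

/-- `C` is the edge set of a cycle. Cycles are compared through their edge sets, so that neither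
the base point nor the orientation matters. -/
def IsCycleEdgeSet (G : SimpleGraph V) (C : Finset (Sym2 V)) : Prop :=
  ∃ (a : V) (p : G.Walk a a), p.IsCycle ∧ p.edges.toFinset = C

/-- Two cycles that share an edge coincide. -/
def EdgeDisjointCycles (G : SimpleGraph V) : Prop :=
  ∀ ⦃C D : Finset (Sym2 V)⦄, IsCycleEdgeSet G C → IsCycleEdgeSet G D →
    ∀ e, e ∈ C → e ∈ D → C = D

theorem IsCactus.edgeDisjointCycles (hG : IsCactus G) : EdgeDisjointCycles G := by
  rintro C D ⟨a, p, hp, rfl⟩ ⟨b, q, hq, rfl⟩ e hep heq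
  by_contra hne
  have shared := hG.2 p q hp hq hne
  induction e with | h x y
  rw [List.mem_toFinset] at hep heq
  refine (p.adj_of_mem_edges hep).ne (card_le_one.1 shared x ?_ y ?_)
  · exact mem_inter.2 ⟨List.mem_toFinset.2 (p.fst_mem_support_of_mem_edges hep),
      List.mem_toFinset.2 (q.fst_mem_support_of_mem_edges heq)⟩
  · exact mem_inter.2 ⟨List.mem_toFinset.2 (p.snd_mem_support_of_mem_edges hep),
      List.mem_toFinset.2 (q.snd_mem_support_of_mem_edges heq)⟩

theorem IsCycleEdgeSet.mem_edgeSet (hC : IsCycleEdgeSet G C) (he : e ∈ C) : e ∈ G.edgeSet := by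
  obtain ⟨a, p, -, rfl⟩ := hC
  exact p.edges_subset_edgeSet (List.mem_toFinset.1 he)

theorem IsCycleEdgeSet.nonempty (hC : IsCycleEdgeSet G C) : C.Nonempty := by
  obtain ⟨a, p, hp, rfl⟩ := hC
  exact (List.toFinset_nonempty_iff _).2 fun h => hp.not_nil (SimpleGraph.Walk.edges_eq_nil.1 h)

theorem isBridge_iff_forall_isCycleEdgeSet (he : e ∈ G.edgeSet) :
    G.IsBridge e ↔ ∀ C, IsCycleEdgeSet G C → e ∉ C := by
  rw [SimpleGraph.isBridge_iff_forall_cycle_notMem he]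
  constructor
  · rintro h _ ⟨a, p, hp, rfl⟩
    rw [List.mem_toFinset]
    exact h p hp
  · exact fun h a p hp hep => h _ ⟨a, p, hp, rfl⟩ (List.mem_toFinset.2 hep)

theorem isCycleEdgeSet_deleteEdges_singleton :
    IsCycleEdgeSet (G.deleteEdges {e}) C ↔ IsCycleEdgeSet G C ∧ e ∉ C := by
  constructor
  · intro h
    refine ⟨?_, fun he => by simpa using h.mem_edgeSet he⟩
    obtain ⟨a, p, hp, rfl⟩ := h
    exact ⟨a, p.mapLe (G.deleteEdges_le _), hp.mapLe _, by simp⟩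
  · rintro ⟨⟨a, p, hp, rfl⟩, he⟩
    have hp' : ∀ f ∈ p.edges, f ∈ (G.deleteEdges {e}).edgeSet := fun f hf => by
      rw [SimpleGraph.edgeSet_deleteEdges]
      exact ⟨p.edges_subset_edgeSet hf, fun h => he (h ▸ List.mem_toFinset.2 hf)⟩
    exact ⟨a, p.transfer _ hp', hp.transfer hp', by simp⟩

theorem EdgeDisjointCycles.deleteEdges_singleton (hQ : EdgeDisjointCycles G) (e : Sym2 V) :
    EdgeDisjointCycles (G.deleteEdges {e}) := fun _ _ hC hD =>
  hQ (isCycleEdgeSet_deleteEdges_singleton.1 hC).1 (isCycleEdgeSet_deleteEdges_singleton.1 hD).1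

theorem IsCycleEdgeSet.connected_deleteEdges_singleton (hG : G.Connected)
    (hC : IsCycleEdgeSet G C) (he : e ∈ C) : (G.deleteEdges {e}).Connected := by
  obtain ⟨a, p, hp, rfl⟩ := hC
  induction e with | h x y
  exact hG.connected_delete_edge_of_not_isBridge fun hb =>
    hb.notMem_edges_of_isCycle hp (List.mem_toFinset.1 he)

theorem EdgeDisjointCycles.eq_or_mem_edges_of_walk (hQ : EdgeDisjointCycles G) (hp : p.IsCycle)
    (hxy : s(x, y) ∈ p.edges) (W : G.Walk y x) (hW : s(x, y) ∉ W.edges) (he : e ∈ p.edges) :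
    e = s(x, y) ∨ e ∈ W.edges := by
  have hclosed :
      (SimpleGraph.Walk.cons (p.adj_of_mem_edges hxy) (W.toPath : G.Walk y x)).IsCycle :=
    SimpleGraph.Path.cons_isCycle _ _ fun h => hW (W.edges_toPath_subset_edges h)
  have hsame := hQ ⟨a, p, hp, rfl⟩ ⟨x, _, hclosed, rfl⟩ s(x, y) (by simpa using hxy) (by simp)
  rw [← List.mem_toFinset, hsame, List.mem_toFinset, SimpleGraph.Walk.edges_cons,
    List.mem_cons] at he
  exact he.imp_right fun h => W.edges_toPath_subset_edges h

theorem EdgeDisjointCycles.length_le_of_walk (hQ : EdgeDisjointCycles G) (hp : p.IsCycle)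
    (hxy : s(x, y) ∈ p.edges) (W : G.Walk y x) (hW : s(x, y) ∉ W.edges) :
    p.length ≤ W.length + 1 := by
  rw [← p.length_edges, ← W.length_edges, ← List.length_cons (a := s(x, y))]
  exact (hp.isTrail.edges_nodup.subperm fun e he =>
    List.mem_cons.2 (hQ.eq_or_mem_edges_of_walk hp hxy W hW he)).length_le

-- Split the cycle as `T ++ D` at `y`; the first edge of `T` is closed up by the rest of `T`
-- followed by `r` backwards, and that walk misses the edges of `D`.
theorem EdgeDisjointCycles.eq_of_walk (hQ : EdgeDisjointCycles G) (hp : p.IsCycle)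
    (hx : x ∈ p.support) (hy : y ∈ p.support) (r : G.Walk x y)
    (hr : ∀ e ∈ r.edges, e ∉ p.edges) : x = y := by
  have hq : (p.rotate x hx).IsCycle := by simpa using hp
  have hyq : y ∈ (p.rotate x hx).support := by simpa using hy
  have hrq : ∀ e ∈ r.edges, e ∉ (p.rotate x hx).edges := fun e he h =>
    hr e he ((p.rotate_edges x hx).mem_iff.1 h)
  generalize p.rotate x hx = q at hq hyq hrq
  have hsplit := congrArg SimpleGraph.Walk.edges (q.take_spec hyq)
  rcases hT : q.takeUntil y hyq with _ | @⟨_, z, _, hxz, T⟩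
  · rfl
  rcases hD : q.dropUntil y hyq with _ | @⟨_, t, _, hyt, D⟩
  · rfl
  simp only [hT, hD, SimpleGraph.Walk.edges_append, SimpleGraph.Walk.edges_cons,
    List.cons_append] at hsplit
  have hnd := hq.isTrail.edges_nodup
  rw [← hsplit, List.nodup_cons, List.nodup_append] at hnd
  rw [← hsplit] at hrq
  have hW : s(x, z) ∉ (T.append r.reverse).edges := by
    intro h
    rw [SimpleGraph.Walk.edges_append, SimpleGraph.Walk.edges_reverse, List.mem_append,
      List.mem_reverse] at h
    exact h.elim (fun h => hnd.1 (by simp [h])) fun h => hrq _ h (by simp)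
  have := hQ.eq_or_mem_edges_of_walk hq (by simp [← hsplit]) (T.append r.reverse) hW
    (e := s(y, t)) (by simp [← hsplit])
  rw [SimpleGraph.Walk.edges_append, SimpleGraph.Walk.edges_reverse, List.mem_append,
    List.mem_reverse] at this
  rcases this with h | h | h
  · exact absurd (by simp [h]) hnd.1
  · exact absurd rfl (hnd.2.2.2 _ h _ (by simp))
  · exact absurd (by simp) (hrq _ h)

theorem EdgeDisjointCycles.mem_edges_of_adj (hQ : EdgeDisjointCycles G) (hp : p.IsCycle)
    (hx : x ∈ p.support) (hy : y ∈ p.support) (h : G.Adj x y) : s(x, y) ∈ p.edges := by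
  by_contra hc
  exact h.ne (hQ.eq_of_walk hp hx hy h.toWalk (by simpa using hc))

theorem EdgeDisjointCycles.eq_of_adj_of_adj (hQ : EdgeDisjointCycles G) (hp : p.IsCycle)
    (hx : x ∈ p.support) (hy : y ∈ p.support) (hz : z ∉ p.support) (hxz : G.Adj x z)
    (hyz : G.Adj y z) : x = y := by
  refine hQ.eq_of_walk hp hx hy (hxz.toWalk.append hyz.symm.toWalk) fun e he hep => hz ?_
  have hze : z ∈ e := by
    have : e = s(x, z) ∨ e = s(z, y) := by simpa using he
    rcases this with rfl | rfl <;> simp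
  exact p.mem_support_of_mem_edges hep hze

theorem exists_isPath_of_mem_edges_isCycle {u v : V} (hp : p.IsCycle) (huv : s(u, v) ∈ p.edges) :
    ∃ W : G.Walk v u, W.IsPath ∧ s(u, v) ∉ W.edges := by
  have hb : ¬G.IsBridge s(v, u) := fun hb =>
    hb.notMem_edges_of_isCycle hp (Sym2.eq_swap ▸ huv)
  rw [SimpleGraph.isBridge_iff_forall_walk_mem_edges, not_forall, Sym2.eq_swap] at hb
  obtain ⟨W, hW⟩ := hb
  exact ⟨W.toPath, W.toPath.2, mt (W.edges_toPath_subset_edges ·) hW⟩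

theorem card_edges_toFinset_of_isCycle (hp : p.IsCycle) : #p.edges.toFinset = p.length := by
  rw [List.toFinset_card_of_nodup hp.isTrail.edges_nodup, p.length_edges]

theorem IsCycleEdgeSet.three_le_card (hC : IsCycleEdgeSet G C) : 3 ≤ #C := by
  obtain ⟨a, p, hp, rfl⟩ := hC
  exact (card_edges_toFinset_of_isCycle hp).symm ▸ hp.three_le_length

/-- `C` is a cycle through `h` all of whose other vertices have their neighbours on `C`; that is,
`C` is attached to the rest of the graph only at `h`. -/
def IsEndCycle (G : SimpleGraph V) (h : V) (C : Finset (Sym2 V)) : Prop :=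
  ∃ p : G.Walk h h, p.IsCycle ∧ p.edges.toFinset = C ∧
    ∀ x ∈ p.support, x ≠ h → ∀ y, G.Adj x y → s(x, y) ∈ p.edges

theorem IsEndCycle.isCycleEdgeSet {h : V} (hC : IsEndCycle G h C) : IsCycleEdgeSet G C :=
  let ⟨p, hp, hpC, _⟩ := hC
  ⟨h, p, hp, hpC⟩

theorem EdgeDisjointCycles.exists_attachment_of_not_isEndCycle (hQ : EdgeDisjointCycles G)
    (hp : p.IsCycle) (hend : ∀ h, ¬IsEndCycle G h p.edges.toFinset) {h : V} (hh : h ∈ p.support) :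
    ∃ x ∈ p.support, x ≠ h ∧ ∃ y ∉ p.support, G.Adj x y := by
  by_contra! hc
  refine hend h ⟨p.rotate h hh, by simpa using hp, ?_, fun x hx hxh y hxy => ?_⟩
  · ext e
    simp only [List.mem_toFinset, (p.rotate_edges h hh).mem_iff]
  · rw [p.mem_support_rotate_iff] at hx
    rw [(p.rotate_edges h hh).mem_iff]
    exact hQ.mem_edges_of_adj hp hx (by_contra fun hy => hc x hx hxh y hy hxy) hxy

theorem EdgeDisjointCycles.isEndCycle_or_two_attachments (hQ : EdgeDisjointCycles G)
    (hC : IsCycleEdgeSet G C) : (∃ h, IsEndCycle G h C) ∨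
      ∃ (x : V) (q : G.Walk x x), q.IsCycle ∧ q.edges.toFinset = C ∧
        (∃ x' ∉ q.support, G.Adj x x') ∧ ∃ y ∈ q.support, y ≠ x ∧ ∃ y' ∉ q.support, G.Adj y y' := by
  obtain ⟨a, p, hp, rfl⟩ := hC
  by_contra! hc
  obtain ⟨x, hx, -, x', hx', hxx'⟩ :=
    hQ.exists_attachment_of_not_isEndCycle hp hc.1 p.start_mem_support
  obtain ⟨y, hy, hyx, y', hy', hyy'⟩ := hQ.exists_attachment_of_not_isEndCycle hp hc.1 hx
  have hmem : ∀ z, z ∈ (p.rotate x hx).support ↔ z ∈ p.support := fun z =>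
    p.mem_support_rotate_iff x hx
  refine hc.2 x (p.rotate x hx) (by simpa using hp) ?_ ⟨x', mt (hmem x').1 hx', hxx'⟩ y
    ((hmem y).2 hy) hyx y' (mt (hmem y').1 hy') hyy'
  ext e
  simp only [List.mem_toFinset, (p.rotate_edges x hx).mem_iff]

end Cycles

section CycleCount

variable {V : Type*} [Fintype V] {G : SimpleGraph V} {C : Finset (Sym2 V)} {e : Sym2 V}

/-- The edge sets of all cycles of `G`. -/
noncomputable def cycleEdgeSets (G : SimpleGraph V) : Finset (Finset (Sym2 V)) :=
  univ.filter (IsCycleEdgeSet G)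

theorem mem_cycleEdgeSets : C ∈ cycleEdgeSets G ↔ IsCycleEdgeSet G C :=
  mem_filter_univ C

theorem cycleEdgeSets_deleteEdges_singleton (hQ : EdgeDisjointCycles G)
    (hC : IsCycleEdgeSet G C) (he : e ∈ C) :
    cycleEdgeSets (G.deleteEdges {e}) = (cycleEdgeSets G).erase C := by
  ext D
  rw [mem_erase, mem_cycleEdgeSets, mem_cycleEdgeSets, isCycleEdgeSet_deleteEdges_singleton]
  constructor
  · rintro ⟨hD, heD⟩
    exact ⟨fun h => heD (h ▸ he), hD⟩
  · rintro ⟨hne, hD⟩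
    exact ⟨hD, fun heD => hne (hQ hD hC e heD he)⟩

theorem isTree_of_cycleEdgeSets_eq_empty (hG : G.Connected) (h : cycleEdgeSets G = ∅) :
    G.IsTree :=
  ⟨hG, fun v c hc => notMem_empty _ (h ▸ mem_cycleEdgeSets.2 ⟨v, c, hc, rfl⟩)⟩

theorem card_edgeFinset_deleteEdges_singleton {_ : Fintype (G.deleteEdges {e}).edgeSet}
    (he : e ∈ G.edgeSet) :
    #(G.deleteEdges {e}).edgeFinset + 1 = #G.edgeFinset := by
  have : (G.deleteEdges {e}).edgeFinset = G.edgeFinset.erase e := by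
    ext f
    simp [and_comm]
  rw [this, card_erase_add_one (SimpleGraph.mem_edgeFinset.2 he)]

theorem EdgeDisjointCycles.card_edgeFinset_add_one (hQ : EdgeDisjointCycles G)
    (hG : G.Connected) : #G.edgeFinset + 1 = Fintype.card V + #(cycleEdgeSets G) := by
  induction hN : #(cycleEdgeSets G) generalizing G with
  | zero => exact (isTree_of_cycleEdgeSets_eq_empty hG (card_eq_zero.1 hN)).card_edgeFinset
  | succ N ih =>
    obtain ⟨C, hC⟩ : (cycleEdgeSets G).Nonempty := card_pos.1 (by omega)
    have hC' := mem_cycleEdgeSets.1 hC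
    obtain ⟨e, he⟩ := hC'.nonempty
    have := ih (hQ.deleteEdges_singleton e) (hC'.connected_deleteEdges_singleton hG he)
      (by rw [cycleEdgeSets_deleteEdges_singleton hQ hC' he, card_erase_of_mem hC, hN,
        Nat.add_sub_cancel])
    rw [card_edgeFinset_deleteEdges_singleton (hC'.mem_edgeSet he)] at this
    omega

end CycleCount

section CycleExcess

variable {V : Type*} [Fintype V] {G : SimpleGraph V} {C : Finset (Sym2 V)} {e : Sym2 V}

/-- The excess of the weight of an edge over `2 m - 1`, the weight of a pendant edge. -/
noncomputable def edgeExcess (G : SimpleGraph V) (e : Sym2 V) : ℤ :=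
  edgeWeight G e - (2 * e(G) - 1)

/-- The excess of the weight of a cycle over that of a quadrangle attached at a single vertex,
whose four edges have weight `8 m - 16` each. -/
noncomputable def cycleExcess (G : SimpleGraph V) (C : Finset (Sym2 V)) : ℤ :=
  ∑ e ∈ C, edgeExcess G e - (24 * e(G) - 60)

theorem edgeExcess_nonneg (hG : G.Connected) (he : e ∈ G.edgeSet) : 0 ≤ edgeExcess G e := by
  induction e with | h u v
  exact sub_nonneg.2 (two_mul_sub_one_le_edgeWeight hG he)

theorem IsCycleEdgeSet.card_le (hC : IsCycleEdgeSet G C) : #C ≤ #G.edgeFinset :=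
  card_le_card fun _ he => SimpleGraph.mem_edgeFinset.2 (hC.mem_edgeSet he)

section LongCycle

variable {a u v : V} {p : G.Walk a a}

theorem two_le_mCloser_of_five_le_length (hG : G.Connected) (hQ : EdgeDisjointCycles G)
    (hp : p.IsCycle) (h5 : 5 ≤ p.length) (huv : s(u, v) ∈ p.edges) : 2 ≤ mCloser G v u := by
  have hvu : v ≠ u := (p.adj_of_mem_edges huv).ne'
  have hlong (W : G.Walk v u) (hW : s(u, v) ∉ W.edges) : 4 ≤ W.length := by
    have := hQ.length_le_of_walk hp huv W hW
    omega
  obtain ⟨W, hWp, hW⟩ := exists_isPath_of_mem_edges_isCycle hp huv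
  have hWl := hlong W hW
  rcases W with _ | @⟨_, x, _, hvx, _ | @⟨_, y, _, hxy, W⟩⟩
  · simp at hWl
  · simp at hWl
  have hvy : v ≠ y := by
    rintro rfl
    simp at hWp
  have hxu : x ≠ u := by
    rintro rfl
    simp at hW
  have hyu : y ≠ u := by
    rintro rfl
    have := hlong (.cons hvx (.cons hxy .nil)) (by simp [hvu, hvu.symm, hxu.symm, hvx.ne])
    simp at this
  have hnxu : ¬G.Adj x u := fun h => by
    have := hlong (.cons hvx (.cons h .nil)) (by simp [hvu, hvu.symm, hxu.symm, hvx.ne])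
    simp at this
  have hnyu : ¬G.Adj y u := fun h => by
    have := hlong (.cons hvx (.cons hxy (.cons h .nil)))
      (by simp [hvu, hvu.symm, hxu.symm, hvx.ne, hvy])
    simp at this
  have hv : v ∉ s(x, y) := by simp [hvx.ne, hvy]
  refine two_le_mCloser (f := s(v, x)) (g := s(x, y)) (fun h => hv (h ▸ Sym2.mem_mk_left v x))
    hvx ?_ hxy ?_
  · exact eDist_lt_of_mem_of_notMem hG (Sym2.mem_mk_left v x) (by simp [hvu.symm, hxu.symm])
  · exact eDist_lt_of_adj hG (Sym2.mem_mk_left x y) hvx.symm (by simp [hxu.symm, hyu.symm])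
      (by simp [hnxu, hnyu])

theorem edgeExcess_of_five_le_length (hG : G.Connected) (hQ : EdgeDisjointCycles G)
    (hp : p.IsCycle) (h5 : 5 ≤ p.length) (huv : s(u, v) ∈ p.edges) :
    8 * e(G) - 24 ≤ edgeExcess G s(u, v) := by
  have := le_edgeWeight (two_le_mCloser_of_five_le_length hG hQ hp h5 (Sym2.eq_swap ▸ huv))
    (two_le_mCloser_of_five_le_length hG hQ hp h5 huv)
    (one_le_mEqui hG (p.adj_of_mem_edges huv))
  rw [edgeExcess]
  push_cast at this
  linarith

theorem lt_cycleExcess_of_five_le_card (hG : G.Connected) (hQ : EdgeDisjointCycles G)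
    (hC : IsCycleEdgeSet G C) (h5 : 5 ≤ #C) : 4 * (e(G) - 2) < cycleExcess G C := by
  have hm : (#C : ℤ) ≤ e(G) := by exact_mod_cast hC.card_le
  have h5' : (5 : ℤ) ≤ #C := by exact_mod_cast h5
  obtain ⟨a, p, hp, rfl⟩ := hC
  rw [card_edges_toFinset_of_isCycle hp] at h5
  have hsum := card_nsmul_le_sum p.edges.toFinset (edgeExcess G) (8 * e(G) - 24) fun e he => by
    induction e with | h u v
    exact edgeExcess_of_five_le_length hG hQ hp h5 (List.mem_toFinset.1 he)
  rw [nsmul_eq_mul] at hsum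
  rw [cycleExcess]
  nlinarith

end LongCycle

end CycleExcess

section Quadrangle

/-- `a b c d` is an induced quadrangle with vertex set `S`, and no vertex outside `S` has two
neighbours on it. This is how a quadrangle sits in a graph with edge-disjoint cycles. -/
structure IsQuadrangle {V : Type*} (G : SimpleGraph V) (S : Finset V) (a b c d : V) : Prop where
  ab : G.Adj a b
  bc : G.Adj b c
  cd : G.Adj c d
  da : G.Adj d a
  ac : a ≠ c
  bd : b ≠ d
  not_adj_ac : ¬G.Adj a c
  not_adj_bd : ¬G.Adj b d
  mem_iff : ∀ x, x ∈ S ↔ x = a ∨ x = b ∨ x = c ∨ x = d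
  eq_of_adj : ∀ x ∈ S, ∀ y ∈ S, ∀ z ∉ S, G.Adj x z → G.Adj y z → x = y

variable {V : Type*} {G : SimpleGraph V} {S : Finset V} {a b c d x y z z' : V}

theorem IsQuadrangle.rotate (h : IsQuadrangle G S a b c d) : IsQuadrangle G S b c d a :=
  ⟨h.bc, h.cd, h.da, h.ab, h.bd, h.ac.symm, h.not_adj_bd, fun h' => h.not_adj_ac h'.symm,
    fun x => by rw [h.mem_iff]; tauto, h.eq_of_adj⟩

theorem IsQuadrangle.reflect (h : IsQuadrangle G S a b c d) : IsQuadrangle G S b a d c :=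
  ⟨h.ab.symm, h.da.symm, h.cd.symm, h.bc.symm, h.bd, h.ac, h.not_adj_bd, h.not_adj_ac,
    fun x => by rw [h.mem_iff]; tauto, h.eq_of_adj⟩

theorem sum_quadrangle_edges (hab : G.Adj a b) (hbc : G.Adj b c) (hcd : G.Adj c d)
    (hda : G.Adj d a) (hac : a ≠ c) (hbd : b ≠ d) (F : Sym2 V → ℤ) :
    ∑ e ∈ {s(a, b), s(b, c), s(c, d), s(d, a)}, F e =
      F s(a, b) + F s(b, c) + F s(c, d) + F s(d, a) := by
  have := hab.ne
  have := hbc.ne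
  have := hcd.ne
  have := hda.ne
  rw [sum_insert, sum_insert, sum_insert, sum_singleton]
  · ring
  all_goals
    simp only [mem_insert, mem_singleton, Sym2.eq_iff]
    grind

theorem EdgeDisjointCycles.exists_isQuadrangle (hQ : EdgeDisjointCycles G) {p : G.Walk a a}
    (hp : p.IsCycle) (h4 : p.length = 4) :
    ∃ b c d, IsQuadrangle G p.support.toFinset a b c d ∧
      p.edges.toFinset = {s(a, b), s(b, c), s(c, d), s(d, a)} := by
  have hch (x y : V) := hQ.mem_edges_of_adj hp (x := x) (y := y)
  have hsep (x y z : V) := hQ.eq_of_adj_of_adj hp (x := x) (y := y) (z := z)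
  rcases p with _ | @⟨_, b, _, hab, _ | @⟨_, c, _, hbc, _ | @⟨_, d, _, hcd, _ | ⟨hda, _ | _⟩⟩⟩⟩ <;>
    simp only [SimpleGraph.Walk.length_cons, SimpleGraph.Walk.length_nil] at h4
  any_goals omega
  rw [SimpleGraph.Walk.cons_isCycle_iff] at hp
  have hnd := hp.1.support_nodup
  simp only [SimpleGraph.Walk.support_cons, SimpleGraph.Walk.support_nil, List.nodup_cons,
    List.mem_cons, List.not_mem_nil, or_false, not_or] at hnd
  have hac : a ≠ c := Ne.symm hnd.2.1.2
  have hbd : b ≠ d := hnd.1.2.1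
  refine ⟨b, c, d, ⟨hab, hbc, hcd, hda, hac, hbd, fun h => ?_, fun h => ?_, fun x => ?_,
    fun x hx y hy z hz => ?_⟩, by ext e; simp⟩
  · have := hch a c (by simp) (by simp) h
    simp [hac, hab.ne, hbc.ne', hcd.ne, hda.ne'] at this
  · have := hch b d (by simp) (by simp) h
    simp [hbd, hab.ne', hbc.ne, hcd.ne', hda.ne] at this
  · simp only [SimpleGraph.Walk.support_cons, SimpleGraph.Walk.support_nil, List.mem_toFinset,
      List.mem_cons, List.not_mem_nil, or_false]
    tauto
  · simp only [List.mem_toFinset] at hx hy hz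
    exact hsep x y z hx hy hz

variable [Fintype V] {C : Finset (Sym2 V)}

theorem IsQuadrangle.le_edgeWeight (hG : G.Connected) (h : IsQuadrangle G S a b c d) :
    8 * e(G) - 16 ≤ edgeWeight G s(a, b) := by
  have := _root_.le_edgeWeight (one_le_mCloser_of_adj hG h.ab h.da.symm h.bd.symm)
    (one_le_mCloser_of_adj hG h.ab.symm h.bc h.ac.symm)
    (two_le_mEqui_of_quadrangle hG h.ab h.bc h.cd h.da h.ac h.bd)
  push_cast at this
  linarith

theorem IsQuadrangle.two_le_mCloser (hG : G.Connected) (h : IsQuadrangle G S a b c d)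
    (hx : x = a ∨ x = d) (hz : z ∉ S) (hxz : G.Adj x z) : 2 ≤ mCloser G a b := by
  obtain ⟨hza, hzb, -, hzd⟩ : z ≠ a ∧ z ≠ b ∧ z ≠ c ∧ z ≠ d := by
    simpa only [h.mem_iff, not_or] using hz
  have hbx : b ∉ s(x, z) := by
    rcases hx with rfl | rfl
    exacts [by simp [h.ab.ne', hzb.symm], by simp [h.bd, hzb.symm]]
  refine _root_.two_le_mCloser (f := s(a, d)) (g := s(x, z))
    (fun hf => ?_) h.da.symm
    (eDist_lt_of_mem_of_notMem hG (Sym2.mem_mk_left a d) (by simp [h.ab.ne', h.bd])) hxz ?_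
  · have : z ∈ s(a, d) := hf ▸ Sym2.mem_mk_right x z
    simp [hza, hzd] at this
  · rcases hx with rfl | rfl
    · exact eDist_lt_of_mem_of_notMem hG (Sym2.mem_mk_left x z) hbx
    · refine eDist_lt_of_adj hG (Sym2.mem_mk_left x z) h.da hbx fun y hy hyb => ?_
      rcases Sym2.mem_iff.1 hy with rfl | rfl
      · exact h.not_adj_bd hyb.symm
      · exact h.bd (h.eq_of_adj b ((h.mem_iff b).2 (by simp)) x ((h.mem_iff x).2 (by simp)) y hz
          hyb.symm hxz)

theorem IsQuadrangle.le_edgeWeight_of_attachments (hG : G.Connected)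
    (h : IsQuadrangle G S a b c d) (hx : x = a ∨ x = d) (hz : z ∉ S) (hxz : G.Adj x z)
    (hy : y = b ∨ y = c) (hz' : z' ∉ S) (hyz : G.Adj y z') :
    12 * e(G) - 36 ≤ edgeWeight G s(a, b) := by
  have := _root_.le_edgeWeight (h.two_le_mCloser hG hx hz hxz)
    (h.reflect.two_le_mCloser hG hy hz' hyz)
    (two_le_mEqui_of_quadrangle hG h.ab h.bc h.cd h.da h.ac h.bd)
  push_cast at this
  linarith

-- Both edges `ab` and `cd` separate the two attachments.
theorem IsQuadrangle.le_sum_of_attachments (hG : G.Connected) (h : IsQuadrangle G S a b c d)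
    (hx : x = a ∨ x = d) (hz : z ∉ S) (hxz : G.Adj x z)
    (hy : y = b ∨ y = c) (hz' : z' ∉ S) (hyz : G.Adj y z') :
    40 * e(G) - 104 ≤ edgeWeight G s(a, b) + edgeWeight G s(b, c) + edgeWeight G s(c, d) +
      edgeWeight G s(d, a) := by
  have hab := h.le_edgeWeight_of_attachments hG hx hz hxz hy hz' hyz
  have hcd := h.rotate.rotate.le_edgeWeight_of_attachments hG hy.symm hz' hyz hx.symm hz hxz
  have hbc := h.rotate.le_edgeWeight hG
  have hda := h.rotate.rotate.rotate.le_edgeWeight hG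
  linarith

theorem IsQuadrangle.cycleExcess_eq (h : IsQuadrangle G S a b c d) :
    cycleExcess G {s(a, b), s(b, c), s(c, d), s(d, a)} = edgeWeight G s(a, b) +
      edgeWeight G s(b, c) + edgeWeight G s(c, d) + edgeWeight G s(d, a) - (32 * e(G) - 64) := by
  rw [cycleExcess, sum_quadrangle_edges h.ab h.bc h.cd h.da h.ac h.bd]
  simp only [edgeExcess]
  ring

theorem cycleExcess_nonneg_of_card_eq_four (hG : G.Connected) (hQ : EdgeDisjointCycles G)
    (hC : IsCycleEdgeSet G C) (h4 : #C = 4) : 0 ≤ cycleExcess G C := by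
  obtain ⟨a, p, hp, rfl⟩ := hC
  obtain ⟨b, c, d, h, hedges⟩ :=
    hQ.exists_isQuadrangle hp (card_edges_toFinset_of_isCycle hp ▸ h4)
  rw [hedges, h.cycleExcess_eq]
  have hab := h.le_edgeWeight hG
  have hbc := h.rotate.le_edgeWeight hG
  have hcd := h.rotate.rotate.le_edgeWeight hG
  have hda := h.rotate.rotate.rotate.le_edgeWeight hG
  linarith

theorem isEndCycle_or_lt_cycleExcess_of_card_eq_four (hG : G.Connected)
    (hQ : EdgeDisjointCycles G) (hC : IsCycleEdgeSet G C) (h4 : #C = 4)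
    (hm : 8 < e(G)) : (∃ h, IsEndCycle G h C) ∨ 4 * (e(G) - 2) < cycleExcess G C := by
  refine (hQ.isEndCycle_or_two_attachments hC).imp_right ?_
  rintro ⟨a, p, hp, rfl, ⟨a', ha', haa'⟩, y, hy, hya, y', hy', hyy'⟩
  obtain ⟨b, c, d, h, hedges⟩ :=
    hQ.exists_isQuadrangle hp (card_edges_toFinset_of_isCycle hp ▸ h4)
  rw [← List.mem_toFinset] at ha' hy hy'
  rw [hedges, h.cycleExcess_eq]
  rcases (h.mem_iff y).1 hy with rfl | hb | hc | rfl
  · exact absurd rfl hya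
  · have := h.le_sum_of_attachments hG (.inl rfl) ha' haa' (.inl hb) hy' hyy'
    linarith
  · have := h.le_sum_of_attachments hG (.inl rfl) ha' haa' (.inr hc) hy' hyy'
    linarith
  · have := h.rotate.rotate.rotate.le_sum_of_attachments hG (.inl rfl) hy' hyy' (.inl rfl) ha' haa'
    linarith

end Quadrangle

section Triangle

theorem sq_add_sq_add_sq_le_of_add_eq_zero {x y z N : ℤ} (hx : |x| ≤ N) (hy : |y| ≤ N)
    (hz : |z| ≤ N) (h : x + y + z = 0) : x ^ 2 + y ^ 2 + z ^ 2 ≤ 2 * N ^ 2 := by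
  obtain rfl : z = -(x + y) := by linarith
  rw [abs_le] at hx hy hz
  rcases le_total 0 x with h0x | h0x <;> rcases le_total 0 y with h0y | h0y <;>
    rcases le_total 0 (x + y) with h0 | h0 <;> nlinarith

variable {V : Type*} {G : SimpleGraph V} {C : Finset (Sym2 V)} {a b c x y u v : V}

theorem sum_triangle_edges (hab : G.Adj a b) (hbc : G.Adj b c) (hca : G.Adj c a)
    (F : Sym2 V → ℤ) :
    ∑ e ∈ {s(a, b), s(b, c), s(c, a)}, F e = F s(a, b) + F s(b, c) + F s(c, a) := by
  have := hab.ne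
  have := hbc.ne
  have := hca.ne
  rw [sum_insert, sum_insert, sum_singleton]
  · ring
  all_goals
    simp only [mem_insert, mem_singleton, Sym2.eq_iff]
    grind

theorem exists_triangle_of_length_eq_three {p : G.Walk a a} (h3 : p.length = 3) :
    ∃ b c, G.Adj a b ∧ G.Adj b c ∧ G.Adj c a ∧
      p.edges.toFinset = {s(a, b), s(b, c), s(c, a)} ∧
      ∀ x, x ∈ p.support ↔ x = a ∨ x = b ∨ x = c := by
  rcases p with _ | @⟨_, b, _, hab, _ | @⟨_, c, _, hbc, _ | ⟨hca, _ | _⟩⟩⟩ <;>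
    simp only [SimpleGraph.Walk.length_cons, SimpleGraph.Walk.length_nil] at h3
  any_goals omega
  refine ⟨b, c, hab, hbc, hca, by ext e; simp, fun x => ?_⟩
  simp only [SimpleGraph.Walk.support_cons, SimpleGraph.Walk.support_nil, List.mem_cons,
    List.not_mem_nil, or_false]
  tauto

variable [Fintype V]

theorem closerDiff_eq_sum_of_adj (hG : G.Connected) (h : G.Adj u v) :
    closerDiff G u v = ∑ f ∈ G.edgeFinset, ((eDist G f v : ℤ) - eDist G f u) := by
  simp only [closerDiff, mCloser, card_filter, Nat.cast_sum, ← sum_sub_distrib]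
  refine sum_congr rfl fun f _ => ?_
  have huv := eDist_le_eDist_add_one hG h f
  have hvu := eDist_le_eDist_add_one hG h.symm f
  split_ifs <;> push_cast <;> omega

theorem closerDiff_add_closerDiff_add_closerDiff (hG : G.Connected) (hab : G.Adj a b)
    (hbc : G.Adj b c) (hca : G.Adj c a) :
    closerDiff G a b + closerDiff G b c + closerDiff G c a = 0 := by
  simp only [closerDiff_eq_sum_of_adj hG, hab, hbc, hca, sum_sub_distrib]
  ring

theorem cycleExcess_triangle (hab : G.Adj a b) (hbc : G.Adj b c) (hca : G.Adj c a) :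
    cycleExcess G {s(a, b), s(b, c), s(c, a)} = 3 * e(G) ^ 2 - 30 * e(G) + 63 -
      (closerDiff G a b ^ 2 + closerDiff G b c ^ 2 + closerDiff G c a ^ 2) := by
  rw [cycleExcess, sum_triangle_edges hab hbc hca]
  simp only [edgeExcess, edgeWeight_mk]
  ring

theorem abs_closerDiff_le_of_triangle (hG : G.Connected) (hab : G.Adj a b) (hbc : G.Adj b c)
    (hca : G.Adj c a) : |closerDiff G a b| ≤ e(G) - 3 := by
  have := abs_closerDiff_le (one_le_mCloser_of_adj hG hab hca.symm hbc.ne')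
    (one_le_mCloser_of_adj hG hab.symm hbc hca.ne) (one_le_mEqui hG hab)
  push_cast at this
  linarith

theorem le_cycleExcess_of_card_eq_three (hG : G.Connected) (hC : IsCycleEdgeSet G C)
    (h3 : #C = 3) : (e(G) - 3) * (e(G) - 15) ≤ cycleExcess G C := by
  obtain ⟨a, p, hp, rfl⟩ := hC
  obtain ⟨b, c, hab, hbc, hca, hedges, -⟩ :=
    exists_triangle_of_length_eq_three (card_edges_toFinset_of_isCycle hp ▸ h3)
  have := sq_add_sq_add_sq_le_of_add_eq_zero (abs_closerDiff_le_of_triangle hG hab hbc hca)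
    (abs_closerDiff_le_of_triangle hG hbc hca hab) (abs_closerDiff_le_of_triangle hG hca hab hbc)
    (closerDiff_add_closerDiff_add_closerDiff hG hab hbc hca)
  rw [hedges, cycleExcess_triangle hab hbc hca]
  linarith

-- The attachment at `a` is equidistant from `b` and `c`.
theorem abs_closerDiff_le_of_triangle_of_opposite (hG : G.Connected) (hab : G.Adj a b)
    (hbc : G.Adj b c) (hca : G.Adj c a) (hax : G.Adj a x) (hxb : x ≠ b) (hxc : x ≠ c) :
    |closerDiff G b c| ≤ e(G) - 4 := by
  have hb : b ∉ s(a, x) := by simp [hab.ne', hxb.symm]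
  have hc : c ∉ s(a, x) := by simp [hca.ne, hxc.symm]
  have hq : 2 ≤ mEqui G b c := by
    refine one_lt_card.2 ⟨s(b, c), mem_filter.2 ⟨SimpleGraph.mem_edgeFinset.2 hbc, ?_⟩, s(a, x),
      mem_filter.2 ⟨SimpleGraph.mem_edgeFinset.2 hax, ?_⟩, fun h => hb (h ▸ Sym2.mem_mk_left b c)⟩
    · rw [(eDist_eq_zero_iff hG).2 (Sym2.mem_mk_left b c),
        (eDist_eq_zero_iff hG).2 (Sym2.mem_mk_right b c)]
    · rw [eDist_eq_one_of_adj hG (Sym2.mem_mk_left a x) hb hab,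
        eDist_eq_one_of_adj hG (Sym2.mem_mk_left a x) hc hca.symm]
  have := abs_closerDiff_le (one_le_mCloser_of_adj hG hbc hab.symm hca.ne')
    (one_le_mCloser_of_adj hG hbc.symm hca hab.ne) hq
  push_cast at this
  linarith

theorem two_le_mCloser_of_adj_of_adj (hG : G.Connected) (hab : G.Adj a b) (hax : G.Adj a x)
    (hay : G.Adj a y) (hxb : x ≠ b) (hyb : y ≠ b) (hxy : x ≠ y) : 2 ≤ mCloser G a b := by
  have hlt {z : V} (hz : z ≠ b) : eDist G s(a, z) a < eDist G s(a, z) b :=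
    eDist_lt_of_mem_of_notMem hG (Sym2.mem_mk_left a z) (by simp [hab.ne', hz.symm])
  exact two_le_mCloser (by simp [hxy, hax.ne']) hax (hlt hxb) hay (hlt hyb)

theorem lt_cycleExcess_of_two_attachments (hG : G.Connected) (hab : G.Adj a b) (hbc : G.Adj b c)
    (hca : G.Adj c a) (hax : G.Adj a x) (hx : x ≠ b ∧ x ≠ c) (hby : G.Adj b y)
    (hy : y ≠ a ∧ y ≠ c) :
    (e(G) - 3) * (e(G) - 15) < cycleExcess G {s(a, b), s(b, c), s(c, a)} := by
  have hdab : |closerDiff G a b| ≤ e(G) - 4 := by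
    have := abs_closerDiff_le
      (two_le_mCloser_of_adj_of_adj hG hab hca.symm hax hbc.ne' hx.1 hx.2.symm)
      (two_le_mCloser_of_adj_of_adj hG hab.symm hbc hby hca.ne hy.1 hy.2.symm)
      (one_le_mEqui hG hab)
    push_cast at this
    linarith
  have hdbc := abs_closerDiff_le_of_triangle_of_opposite hG hab hbc hca hax hx.1 hx.2
  have hdca := abs_closerDiff_le_of_triangle_of_opposite hG hbc hca hab hby hy.2 hy.1
  have hm : 0 ≤ e(G) - 4 := (abs_nonneg _).trans hdab
  have := sq_add_sq_add_sq_le_of_add_eq_zero hdab hdbc hdca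
    (closerDiff_add_closerDiff_add_closerDiff hG hab hbc hca)
  rw [cycleExcess_triangle hab hbc hca]
  linarith

theorem isEndCycle_or_lt_cycleExcess_of_card_eq_three (hG : G.Connected)
    (hQ : EdgeDisjointCycles G) (hC : IsCycleEdgeSet G C) (h3 : #C = 3) :
    (∃ h, IsEndCycle G h C) ∨ (e(G) - 3) * (e(G) - 15) < cycleExcess G C := by
  refine (hQ.isEndCycle_or_two_attachments hC).imp_right ?_
  rintro ⟨a, p, hp, rfl, ⟨x, hx, hax⟩, y, hy, hya, y', hy', hyy'⟩
  obtain ⟨b, c, hab, hbc, hca, hedges, hmem⟩ :=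
    exists_triangle_of_length_eq_three (card_edges_toFinset_of_isCycle hp ▸ h3)
  rw [hmem, not_or, not_or] at hx hy'
  rw [hedges]
  rcases (hmem y).1 hy with rfl | rfl | rfl
  · exact absurd rfl hya
  · exact lt_cycleExcess_of_two_attachments hG hab hbc hca hax hx.2 hyy' ⟨hy'.1, hy'.2.2⟩
  · have hrot : ({s(a, b), s(b, y), s(y, a)} : Finset (Sym2 V)) = {s(y, a), s(a, b), s(b, y)} := by
      ext; simp only [mem_insert, mem_singleton]; tauto
    rw [hrot]
    exact lt_cycleExcess_of_two_attachments hG hca hab hbc hyy' ⟨hy'.1, hy'.2.1⟩ hax hx.2.symm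

end Triangle

section Bridge

variable {V : Type*} {G : SimpleGraph V} {u v w : V} {e : Sym2 V}

/-- `v` is a pendant vertex of `G` whose only neighbour is `u`. -/
def IsLeafAt (G : SimpleGraph V) (u v : V) : Prop :=
  G.Adj u v ∧ ∀ x, G.Adj v x → x = u

/-- `u v w` is a pendant path of length two attached at `u`: the vertex `w` is pendant and the
vertex `v` has degree two. -/
structure IsPendantPath (G : SimpleGraph V) (u v w : V) : Prop where
  adj : G.Adj u v
  ne : w ≠ u
  isLeafAt : IsLeafAt G v w
  eq_or_eq_of_adj : ∀ x, G.Adj v x → x = u ∨ x = w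

theorem isLeafAt_or_exists_adj_ne (h : G.Adj u v) : IsLeafAt G u v ∨ ∃ w, G.Adj v w ∧ w ≠ u := by
  by_cases hx : ∃ w, G.Adj v w ∧ w ≠ u
  · exact .inr hx
  · exact .inl ⟨h, fun x hvx => by_contra fun hxu => hx ⟨x, hvx, hxu⟩⟩

variable [Fintype V]

theorem isPendantPath_of_isBridge (hG : G.Connected) (huv : G.Adj u v) (hb : G.IsBridge s(u, v))
    (hvw : G.Adj v w) (hwu : w ≠ u) (hc : mCloser G v u ≤ 1) : IsPendantPath G u v w := by
  rw [SimpleGraph.isBridge_iff_forall_walk_mem_edges] at hb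
  have hnwu : ¬G.Adj w u := fun h => by
    have := hb (.cons h.symm (.cons hvw.symm .nil))
    simp [hvw.ne, hwu.symm, huv.ne] at this
  have hlt : eDist G s(v, w) v < eDist G s(v, w) u :=
    eDist_lt_of_mem_of_notMem hG (Sym2.mem_mk_left v w) (by simp [huv.ne, hwu.symm])
  refine ⟨huv, hwu, ⟨hvw, fun x hwx => by_contra fun hxv => ?_⟩, fun x hvx => ?_⟩
  · have hxu : x ≠ u := fun h => hnwu (h ▸ hwx)
    have hnxu : ¬G.Adj x u := fun h => by
      have := hb (.cons h.symm (.cons hwx.symm (.cons hvw.symm .nil)))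
      simp [hvw.ne, hwu.symm, huv.ne, hxu.symm, Ne.symm hxv] at this
    refine hc.not_gt (two_le_mCloser (f := s(v, w)) (g := s(w, x)) ?_ hvw hlt hwx ?_)
    · simp [hvw.ne, Ne.symm hxv]
    · exact eDist_lt_of_adj hG (Sym2.mem_mk_left w x) hvw.symm
        (by simp [hwu.symm, hxu.symm]) (by simp [hnwu, hnxu])
  · by_contra! hx
    exact hc.not_gt
      (two_le_mCloser_of_adj_of_adj hG huv.symm hvw hvx hwu hx.1 hx.2.symm)

theorem isPendantPath_of_edgeExcess_eq (hG : G.Connected) (hm : 4 < e(G)) (huv : G.Adj u v)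
    (hb : G.IsBridge s(u, v)) {u' v' : V} (huu' : G.Adj u u') (hu' : u' ≠ v) (hvv' : G.Adj v v')
    (hv' : v' ≠ u) (heq : edgeExcess G s(u, v) = 4 * (e(G) - 2)) :
    IsPendantPath G u v v' ∨ IsPendantPath G v u u' := by
  by_cases hu : mCloser G u v ≤ 1
  · exact .inr (isPendantPath_of_isBridge hG huv.symm (Sym2.eq_swap ▸ hb) huu' hu' hu)
  by_cases hv : mCloser G v u ≤ 1
  · exact .inl (isPendantPath_of_isBridge hG huv hb hvv' hv' hv)
  have := le_edgeWeight (not_le.1 hu) (not_le.1 hv) (one_le_mEqui hG huv)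
  rw [edgeExcess] at heq
  push_cast at this
  linarith

theorem edgeExcess_cases_of_isBridge (hG : G.Connected) (hm : 4 < e(G)) (he : e ∈ G.edgeSet)
    (hb : G.IsBridge e) : (∃ u v, IsLeafAt G u v ∧ e = s(u, v)) ∨
      4 * (e(G) - 2) ≤ edgeExcess G e ∧ (edgeExcess G e = 4 * (e(G) - 2) →
        ∃ u v w, IsPendantPath G u v w ∧ e = s(u, v)) := by
  induction e with | h u v
  have huv : G.Adj u v := he
  rcases isLeafAt_or_exists_adj_ne huv with hl | ⟨v', hvv', hv'⟩
  · exact .inl ⟨u, v, hl, rfl⟩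
  rcases isLeafAt_or_exists_adj_ne huv.symm with hl | ⟨u', huu', hu'⟩
  · exact .inl ⟨v, u, hl, Sym2.eq_swap⟩
  refine .inr ⟨?_, fun heq => ?_⟩
  · have := le_edgeWeight (one_le_mCloser_of_adj hG huv huu' hu')
      (one_le_mCloser_of_adj hG huv.symm hvv' hv') (one_le_mEqui hG huv)
    rw [edgeExcess]
    push_cast at this
    linarith
  · rcases isPendantPath_of_edgeExcess_eq hG hm huv hb huu' hu' hvv' hv' heq with h | h
    · exact ⟨u, v, v', h, rfl⟩
    · exact ⟨v, u, u', h, Sym2.eq_swap⟩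

end Bridge

section Pieces

theorem forall_or_le_sum {ι : Type*} {s : Finset ι} {F : ι → ℤ} {good special : ι → Prop} {T : ℤ}
    (hT : 0 < T) (h : ∀ i ∈ s, good i ∧ 0 ≤ F i ∨ T ≤ F i ∧ (F i = T → special i)) :
    (∀ i ∈ s, good i) ∨ T ≤ ∑ i ∈ s, F i ∧
      (∑ i ∈ s, F i = T → ∃ j ∈ s, special j ∧ ∀ i ∈ s, i ≠ j → good i) := by
  by_cases hgood : ∀ i ∈ s, good i
  · exact .inl hgood
  push Not at hgood
  obtain ⟨j, hj, hbad⟩ := hgood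
  obtain ⟨hTj, hspecial⟩ := (h j hj).resolve_left fun hj => hbad hj.1
  have hsum := add_sum_erase s F hj
  have hnonneg : ∀ i ∈ s.erase j, 0 ≤ F i := fun i hi =>
    (h i (mem_of_mem_erase hi)).elim And.right fun hi => hT.le.trans hi.1
  have hrest := sum_nonneg hnonneg
  refine .inr ⟨by linarith, fun heq => ⟨j, hj, hspecial (by linarith), fun i hi hij => ?_⟩⟩
  have hi' := single_le_sum hnonneg (mem_erase.2 ⟨hij, hi⟩)
  exact ((h i hi).resolve_right fun hi => by linarith [hi.1]).1

variable {V : Type*} [Fintype V] {G : SimpleGraph V} {C : Finset (Sym2 V)}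
  {i : Sym2 V ⊕ Finset (Sym2 V)}

/-- The pieces into which a graph with edge-disjoint cycles decomposes: its bridges (`Sum.inl`) and
the edge sets of its cycles (`Sum.inr`). -/
noncomputable def pieces (G : SimpleGraph V) : Finset (Sym2 V ⊕ Finset (Sym2 V)) :=
  (G.edgeFinset.filter G.IsBridge).disjSum (cycleEdgeSets G)

/-- The excess of a piece: of a bridge over a pendant edge, of a cycle over an end quadrangle. -/
noncomputable def pieceExcess (G : SimpleGraph V) : Sym2 V ⊕ Finset (Sym2 V) → ℤ :=
  Sum.elim (edgeExcess G) (cycleExcess G)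

/-- The pieces of a bundle of quadrangles: pendant edges and end quadrangles. -/
def IsMinimalPiece (G : SimpleGraph V) : Sym2 V ⊕ Finset (Sym2 V) → Prop :=
  Sum.elim (fun e => ∃ u v, IsLeafAt G u v ∧ e = s(u, v))
    fun C => #C = 4 ∧ ∃ h, IsEndCycle G h C

/-- The piece is the edge of a pendant path of length two at which the path is attached. -/
def IsPathPiece (G : SimpleGraph V) (i : Sym2 V ⊕ Finset (Sym2 V)) : Prop :=
  ∃ u v w, IsPendantPath G u v w ∧ i = .inl s(u, v)

/-- The piece is an end triangle. -/
def IsTrianglePiece (G : SimpleGraph V) (i : Sym2 V ⊕ Finset (Sym2 V)) : Prop :=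
  ∃ C h, IsEndCycle G h C ∧ #C = 3 ∧ i = .inr C

theorem inl_mem_pieces {e : Sym2 V} : .inl e ∈ pieces G ↔ e ∈ G.edgeSet ∧ G.IsBridge e := by
  rw [pieces, inl_mem_disjSum, mem_filter, SimpleGraph.mem_edgeFinset]

theorem inr_mem_pieces : .inr C ∈ pieces G ↔ IsCycleEdgeSet G C := by
  rw [pieces, inr_mem_disjSum, mem_cycleEdgeSets]

theorem EdgeDisjointCycles.sum_edgeFinset (hQ : EdgeDisjointCycles G) (F : Sym2 V → ℤ) :
    ∑ e ∈ G.edgeFinset, F e =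
      ∑ e ∈ G.edgeFinset with G.IsBridge e, F e + ∑ C ∈ cycleEdgeSets G, ∑ e ∈ C, F e := by
  have hdisj : Set.PairwiseDisjoint (↑(cycleEdgeSets G)) (id : Finset (Sym2 V) → _) :=
    fun C hC D hD hne => disjoint_left.2 fun e heC heD =>
      hne (hQ (mem_cycleEdgeSets.1 hC) (mem_cycleEdgeSets.1 hD) e heC heD)
  rw [← sum_filter_add_sum_filter_not G.edgeFinset G.IsBridge]
  congr 1
  refine Eq.trans ?_ (sum_biUnion hdisj)
  refine sum_congr (ext fun e => ?_) fun _ _ => rfl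
  rw [mem_filter, mem_biUnion, SimpleGraph.mem_edgeFinset]
  constructor
  · rintro ⟨he, hb⟩
    rw [isBridge_iff_forall_isCycleEdgeSet he] at hb
    push Not at hb
    obtain ⟨C, hC, heC⟩ := hb
    exact ⟨C, mem_cycleEdgeSets.2 hC, heC⟩
  · rintro ⟨C, hC, heC⟩
    have hC := mem_cycleEdgeSets.1 hC
    have he := hC.mem_edgeSet heC
    exact ⟨he, fun hb => (isBridge_iff_forall_isCycleEdgeSet he).1 hb C hC heC⟩

theorem EdgeDisjointCycles.sum_edgeWeight (hQ : EdgeDisjointCycles G) :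
    ∑ e ∈ G.edgeFinset, edgeWeight G e = e(G) * (2 * e(G) - 1) +
      #(cycleEdgeSets G) * (24 * e(G) - 60) + ∑ i ∈ pieces G, pieceExcess G i := by
  have hpieces : ∑ i ∈ pieces G, pieceExcess G i =
      ∑ e ∈ G.edgeFinset, edgeExcess G e - #(cycleEdgeSets G) * (24 * e(G) - 60) := by
    simp only [pieces, pieceExcess, sum_disjSum, Sum.elim_inl, Sum.elim_inr, cycleExcess,
      sum_sub_distrib, hQ.sum_edgeFinset (edgeExcess G), sum_const, nsmul_eq_mul]
    ring
  simp only [edgeExcess, sum_sub_distrib, sum_const, nsmul_eq_mul] at hpieces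
  linarith

theorem pieceExcess_cases (hG : G.Connected) (hQ : EdgeDisjointCycles G) (hm : 8 < e(G))
    (hi : i ∈ pieces G) : IsMinimalPiece G i ∧ 0 ≤ pieceExcess G i ∨
      4 * (e(G) - 2) ≤ pieceExcess G i ∧
        (pieceExcess G i = 4 * (e(G) - 2) → IsPathPiece G i) ∨
      (e(G) - 3) * (e(G) - 15) ≤ pieceExcess G i ∧
        (pieceExcess G i = (e(G) - 3) * (e(G) - 15) → IsTrianglePiece G i) := by
  rcases i with e | C
  · obtain ⟨he, hb⟩ := inl_mem_pieces.1 hi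
    rcases edgeExcess_cases_of_isBridge hG (by linarith) he hb with hleaf | ⟨hle, hpath⟩
    · exact .inl ⟨hleaf, edgeExcess_nonneg hG he⟩
    · refine .inr (.inl ⟨hle, fun heq => ?_⟩)
      obtain ⟨u, v, w, huvw, rfl⟩ := hpath heq
      exact ⟨u, v, w, huvw, rfl⟩
  · have hC := inr_mem_pieces.1 hi
    have strict (h : 4 * (e(G) - 2) < cycleExcess G C) : 4 * (e(G) - 2) ≤ cycleExcess G C ∧
        (cycleExcess G C = 4 * (e(G) - 2) → IsPathPiece G (.inr C)) :=
      ⟨h.le, fun heq => absurd heq h.ne'⟩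
    obtain h3 | h4 | h5 : #C = 3 ∨ #C = 4 ∨ 5 ≤ #C := by
      have := hC.three_le_card
      omega
    · refine .inr (.inr ⟨le_cycleExcess_of_card_eq_three hG hC h3, fun heq => ?_⟩)
      obtain ⟨h, hend⟩ :=
        (isEndCycle_or_lt_cycleExcess_of_card_eq_three hG hQ hC h3).resolve_right heq.le.not_gt
      exact ⟨C, h, hend, h3, rfl⟩
    · rcases isEndCycle_or_lt_cycleExcess_of_card_eq_four hG hQ hC h4 hm with hend | hlt
      · exact .inl ⟨⟨h4, hend⟩, cycleExcess_nonneg_of_card_eq_four hG hQ hC h4⟩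
      · exact .inr (.inl (strict hlt))
    · exact .inr (.inl (strict (lt_cycleExcess_of_five_le_card hG hQ hC h5)))

theorem minimal_or_le_sum_of_twenty_le (hG : G.Connected) (hQ : EdgeDisjointCycles G)
    (hm : 20 ≤ e(G)) : (∀ i ∈ pieces G, IsMinimalPiece G i) ∨
      4 * (e(G) - 2) ≤ ∑ i ∈ pieces G, pieceExcess G i ∧
        (∑ i ∈ pieces G, pieceExcess G i = 4 * (e(G) - 2) →
          ∃ j ∈ pieces G, IsPathPiece G j ∧ ∀ i ∈ pieces G, i ≠ j → IsMinimalPiece G i) := by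
  have hlt : 4 * (e(G) - 2) < (e(G) - 3) * (e(G) - 15) := by nlinarith
  refine forall_or_le_sum (by linarith) fun i hi => ?_
  refine (pieceExcess_cases hG hQ (by linarith) hi).imp_right ?_
  rintro (h | h)
  · exact h
  · exact ⟨hlt.le.trans h.1, fun heq => absurd h.1 (by linarith)⟩

theorem minimal_or_le_sum_of_le_nineteen (hG : G.Connected) (hQ : EdgeDisjointCycles G)
    (hm : 15 < e(G)) (hm' : e(G) ≤ 19) : (∀ i ∈ pieces G, IsMinimalPiece G i) ∨
      (e(G) - 3) * (e(G) - 15) ≤ ∑ i ∈ pieces G, pieceExcess G i ∧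
        (∑ i ∈ pieces G, pieceExcess G i = (e(G) - 3) * (e(G) - 15) →
          ∃ j ∈ pieces G, IsTrianglePiece G j ∧ ∀ i ∈ pieces G, i ≠ j → IsMinimalPiece G i) := by
  have hlt : (e(G) - 3) * (e(G) - 15) < 4 * (e(G) - 2) := by nlinarith
  refine forall_or_le_sum (mul_pos (by linarith) (by linarith)) fun i hi => ?_
  refine (pieceExcess_cases hG hQ (by linarith) hi).imp_right ?_
  rintro (h | h)
  · exact ⟨hlt.le.trans h.1, fun heq => absurd h.1 (by linarith)⟩
  · exact h

end Pieces

section AttachedSets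

variable {V : Type*} {G : SimpleGraph V} {h u v w x : V} {a b c : V} {S : Set V} {e : Sym2 V}

/-- The only vertex outside `S` that may be adjacent to a vertex of `S` is `h`. -/
def AttachedAt (G : SimpleGraph V) (h : V) (S : Set V) : Prop :=
  ∀ s ∈ S, ∀ y, G.Adj s y → y ∈ S ∨ y = h

theorem IsLeafAt.attachedAt (hv : IsLeafAt G h v) : AttachedAt G h {v} := by
  rintro _ rfl y hy
  exact .inr (hv.2 y hy)

theorem IsPendantPath.attachedAt (hp : IsPendantPath G h v w) : AttachedAt G h {v, w} := by
  rintro _ (rfl | rfl) y hy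
  · exact (hp.eq_or_eq_of_adj y hy).symm.imp_left .inr
  · exact .inl (.inl (hp.isLeafAt.2 y hy))

theorem AttachedAt.dist_eq (hS : AttachedAt G h S) (hG : G.Connected) (hx : x ∉ S) (hv : v ∈ S) :
    G.dist x v = G.dist x h + G.dist h v := by
  obtain ⟨p, hp⟩ := hG.exists_walk_length_eq_dist x v
  obtain ⟨d, hd, hfst, hsnd⟩ := p.exists_boundary_dart Sᶜ hx (not_not.2 hv)
  have hh : h ∈ p.support :=
    (hS d.snd (not_not.1 hsnd) d.fst d.adj.symm).resolve_left hfst ▸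
      p.dart_fst_mem_support_of_mem_darts hd
  refine le_antisymm hG.dist_triangle ?_
  rw [← hp, ← congrArg SimpleGraph.Walk.length (p.take_spec hh), SimpleGraph.Walk.length_append]
  exact add_le_add (SimpleGraph.dist_le _) (SimpleGraph.dist_le _)

theorem AttachedAt.eDist_eq (hS : AttachedAt G h S) (hG : G.Connected) (he : ∀ x ∈ e, x ∉ S)
    (hv : v ∈ S) : eDist G e v = eDist G e h + G.dist h v := by
  induction e with | h x y
  rw [eDist_mk, eDist_mk, hS.dist_eq hG (he x (Sym2.mem_mk_left x y)) hv,
    hS.dist_eq hG (he y (Sym2.mem_mk_right x y)) hv, min_add_add_right]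

theorem AttachedAt.eDist_lt_eDist (hS : AttachedAt G h S) (hG : G.Connected)
    (he : ∀ x ∈ e, x ∉ S) (hu : u ∈ insert h S) (hv : v ∈ S) (hlt : G.dist h u < G.dist h v) :
    eDist G e u < eDist G e v := by
  rw [hS.eDist_eq hG he hv]
  rcases hu with rfl | hu
  · rw [G.dist_self] at hlt
    exact Nat.lt_add_of_pos_right hlt
  · rw [hS.eDist_eq hG he hu]
    exact Nat.add_lt_add_left hlt _

/-- `h a c` is a triangle attached to the rest of the graph at `h`. -/
structure IsEndTriangle (G : SimpleGraph V) (h a c : V) : Prop where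
  ha : G.Adj h a
  ac : G.Adj a c
  ch : G.Adj c h
  attachedAt : AttachedAt G h {a, c}

theorem IsEndTriangle.symm (ht : IsEndTriangle G h a c) : IsEndTriangle G h c a :=
  ⟨ht.ch.symm, ht.ac.symm, ht.ha.symm, Set.pair_comm a c ▸ ht.attachedAt⟩

/-- `h a b c` is an induced quadrangle attached to the rest of the graph at `h`. -/
structure IsEndQuadrangle (G : SimpleGraph V) (h a b c : V) : Prop where
  ha : G.Adj h a
  ab : G.Adj a b
  bc : G.Adj b c
  ch : G.Adj c h
  hb : h ≠ b
  ac : a ≠ c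
  not_adj_hb : ¬G.Adj h b
  not_adj_ac : ¬G.Adj a c
  attachedAt : AttachedAt G h {a, b, c}

theorem IsEndQuadrangle.symm (hq : IsEndQuadrangle G h a b c) : IsEndQuadrangle G h c b a :=
  ⟨hq.ch.symm, hq.bc.symm, hq.ab.symm, hq.ha.symm, hq.hb, hq.ac.symm, hq.not_adj_hb,
    fun h => hq.not_adj_ac h.symm,
    (show ({a, b, c} : Set V) = {c, b, a} by grind) ▸ hq.attachedAt⟩

variable [Fintype V]

/-- The edges of `G` with an endpoint in `S`. -/
noncomputable def edgesMeeting (G : SimpleGraph V) (S : Set V) : Finset (Sym2 V) :=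
  {e ∈ G.edgeFinset | ∃ x ∈ S, x ∈ e}

/-- The total weight of the edges meeting `S`. -/
noncomputable def branchWeight (G : SimpleGraph V) (S : Set V) : ℤ :=
  ∑ e ∈ edgesMeeting G S, edgeWeight G e

theorem edgesMeeting_subset_iff {T : Finset (Sym2 V)} :
    edgesMeeting G S ⊆ T ↔ ∀ x ∈ S, ∀ y, G.Adj x y → s(x, y) ∈ T := by
  refine ⟨fun hT x hx y hxy => hT ?_, fun hT e he => ?_⟩
  · exact mem_filter.2 ⟨SimpleGraph.mem_edgeFinset.2 hxy, x, hx, Sym2.mem_mk_left x y⟩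
  · obtain ⟨he, x, hx, y, rfl⟩ := mem_filter.1 he
    exact hT x hx y (SimpleGraph.mem_edgeFinset.1 he)

theorem branchWeight_le_sum {T : Finset (Sym2 V)} (hT : edgesMeeting G S ⊆ T) :
    branchWeight G S ≤ ∑ e ∈ T, edgeWeight G e :=
  sum_le_sum_of_subset_of_nonneg hT fun e _ _ => edgeWeight_nonneg G e

theorem sum_edgeWeight_le_sum_branchWeight {ι : Type*} [Fintype ι] (S : ι → Set V)
    (hS : ∀ x ≠ h, ∃ i, x ∈ S i) :
    ∑ e ∈ G.edgeFinset, edgeWeight G e ≤ ∑ i, branchWeight G (S i) := by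
  have meets (e) (he : e ∈ G.edgeFinset) : ∃ i, ∃ x ∈ S i, x ∈ e := by
    induction e with | h x y
    have hxy : G.Adj x y := SimpleGraph.mem_edgeFinset.1 he
    by_cases hx : x = h
    · obtain ⟨i, hi⟩ := hS y fun hy => hxy.ne (hx.trans hy.symm)
      exact ⟨i, y, hi, Sym2.mem_mk_right x y⟩
    · obtain ⟨i, hi⟩ := hS x hx
      exact ⟨i, x, hi, Sym2.mem_mk_left x y⟩
  calc ∑ e ∈ G.edgeFinset, edgeWeight G e
      ≤ ∑ e ∈ G.edgeFinset, ∑ i, if ∃ x ∈ S i, x ∈ e then edgeWeight G e else 0 :=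
        sum_le_sum fun e he => by
          obtain ⟨i, hi⟩ := meets e he
          refine (if_pos hi).ge.trans (single_le_sum
            (f := fun i => if ∃ x ∈ S i, x ∈ e then edgeWeight G e else 0) (fun j _ => ?_)
            (mem_univ i))
          exact ite_nonneg (edgeWeight_nonneg G e) le_rfl
    _ = ∑ i, branchWeight G (S i) := by
        rw [sum_comm]
        simp only [branchWeight, edgesMeeting, sum_filter]

theorem edgeWeight_le_of_eDist_lt {q : ℕ} {T : Finset (Sym2 V)} (hq : q ≤ mEqui G u v)
    (hT : ∀ e ∈ G.edgeFinset, e ∉ T → eDist G e u < eDist G e v)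
    (hTq : 2 * #T ≤ #G.edgeFinset + q) :
    edgeWeight G s(u, v) ≤ e(G) ^ 2 - (e(G) - 2 * #T + q) ^ 2 := by
  have hcloser : #(G.edgeFinset \ T) ≤ mCloser G u v := card_le_card fun e he =>
    mem_filter.2 ⟨(mem_sdiff.1 he).1, hT e (mem_sdiff.1 he).1 (mem_sdiff.1 he).2⟩
  have hcard := le_card_sdiff T G.edgeFinset
  have hsum := mCloser_add_mCloser_add_mEqui G u v
  rw [edgeWeight_mk, sub_le_sub_iff_left]
  refine pow_le_pow_left₀ (by omega) ?_ 2
  rw [closerDiff]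
  omega

theorem AttachedAt.edgeWeight_le {q : ℕ} {T : Finset (Sym2 V)} (hS : AttachedAt G h S)
    (hG : G.Connected) (hu : u ∈ insert h S) (hv : v ∈ S) (hlt : G.dist h u < G.dist h v)
    (hq : q ≤ mEqui G u v) (hT : ∀ e ∈ edgesMeeting G S, e ∉ T → eDist G e u < eDist G e v)
    (hTq : 2 * #T ≤ #G.edgeFinset + q) :
    edgeWeight G s(u, v) ≤ e(G) ^ 2 - (e(G) - 2 * #T + q) ^ 2 := by
  refine edgeWeight_le_of_eDist_lt hq (fun e he heT => ?_) hTq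
  by_cases hmeet : ∃ x ∈ S, x ∈ e
  · exact hT e (mem_filter.2 ⟨he, hmeet⟩) heT
  · push Not at hmeet
    exact hS.eDist_lt_eDist hG (fun x hx hxS => hmeet x hxS hx) hu hv hlt

theorem edgesMeeting_subset_of_isLeafAt (hv : IsLeafAt G h v) :
    edgesMeeting G {v} ⊆ {s(h, v)} := edgesMeeting_subset_iff.2 <| by
  rintro _ rfl y hy
  rw [hv.2 y hy, mem_singleton, Sym2.eq_swap]

theorem IsLeafAt.edgeWeight_le (hG : G.Connected) (hv : IsLeafAt G h v) :
    edgeWeight G s(h, v) ≤ 2 * e(G) - 1 := by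
  have hpos : 0 < #G.edgeFinset := card_pos.2 ⟨s(h, v), SimpleGraph.mem_edgeFinset.2 hv.1⟩
  have := hv.attachedAt.edgeWeight_le hG (u := h) (.inl rfl) rfl
    (by simp [SimpleGraph.dist_eq_one_iff_adj.2 hv.1]) (one_le_mEqui hG hv.1)
    (fun e he heT => absurd (edgesMeeting_subset_of_isLeafAt hv he) heT)
    (by rw [card_singleton]; omega)
  push_cast [card_singleton] at this
  linarith

theorem IsLeafAt.branchWeight_le (hG : G.Connected) (hv : IsLeafAt G h v) :
    branchWeight G {v} ≤ 2 * e(G) - 1 :=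
  (branchWeight_le_sum (edgesMeeting_subset_of_isLeafAt hv)).trans
    ((sum_singleton _ _).trans_le (hv.edgeWeight_le hG))

theorem IsPendantPath.branchWeight_le (hG : G.Connected) (hm : 3 ≤ #G.edgeFinset)
    (hp : IsPendantPath G h v w) :
    branchWeight G {v, w} ≤ (6 * e(G) - 9) + (2 * e(G) - 1) := by
  have hmeet : edgesMeeting G {v, w} ⊆ {s(h, v), s(v, w)} := edgesMeeting_subset_iff.2 <| by
    rintro _ (rfl | rfl) y hy
    · rcases hp.eq_or_eq_of_adj y hy with rfl | rfl <;> simp [Sym2.eq_swap]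
    · simp [hp.isLeafAt.2 y hy, Sym2.eq_swap]
  have hne : s(h, v) ≠ s(v, w) := by simp [hp.adj.ne, hp.ne.symm]
  have hle := hp.attachedAt.edgeWeight_le hG (u := h) (.inl rfl) (.inl rfl)
    (by simp [SimpleGraph.dist_eq_one_iff_adj.2 hp.adj]) (one_le_mEqui hG hp.adj)
    (fun e he heT => absurd (hmeet he) heT) (by rw [card_pair hne]; omega)
  have hsum := branchWeight_le_sum hmeet
  rw [sum_pair hne] at hsum
  push_cast [card_pair hne] at hle
  linarith [hp.isLeafAt.edgeWeight_le hG]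

theorem IsEndTriangle.edgesMeeting_subset (ht : IsEndTriangle G h a c) :
    edgesMeeting G {a, c} ⊆ {s(h, a), s(a, c), s(c, h)} := edgesMeeting_subset_iff.2 <| by
  rintro _ (rfl | rfl) y hy <;> rcases ht.attachedAt _ (by simp) y hy with (rfl | rfl) | rfl <;>
    first | exact absurd rfl hy.ne | simp [Sym2.eq_swap]

theorem IsEndTriangle.edgeWeight_le (hG : G.Connected) (hm : 3 ≤ #G.edgeFinset)
    (ht : IsEndTriangle G h a c) : edgeWeight G s(h, a) ≤ 6 * e(G) - 9 := by
  have hne : s(h, a) ≠ s(a, c) := by simp [ht.ha.ne, ht.ch.ne']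
  have := ht.attachedAt.edgeWeight_le hG (u := h) (T := {s(h, a), s(a, c)}) (.inl rfl) (.inl rfl)
    (by simp [SimpleGraph.dist_eq_one_iff_adj.2 ht.ha]) (one_le_mEqui hG ht.ha)
    (fun e he heT => ?_) (by rw [card_pair hne]; omega)
  · push_cast [card_pair hne] at this
    linarith
  · obtain rfl : e = s(c, h) := by
      have := ht.edgesMeeting_subset he
      simp only [mem_insert, mem_singleton] at this heT
      tauto
    exact eDist_lt_of_mem_of_notMem hG (Sym2.mem_mk_right c h) (by simp [ht.ac.ne, ht.ha.ne'])

theorem IsEndTriangle.branchWeight_le (hG : G.Connected) (hm : 3 ≤ #G.edgeFinset)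
    (ht : IsEndTriangle G h a c) :
    branchWeight G {a, c} ≤ 2 * (6 * e(G) - 9) + e(G) ^ 2 := by
  have hsum := branchWeight_le_sum ht.edgesMeeting_subset
  rw [sum_triangle_edges ht.ha ht.ac ht.ch] at hsum
  have hha := ht.edgeWeight_le hG hm
  have hhc := ht.symm.edgeWeight_le hG hm
  have hac : edgeWeight G s(a, c) ≤ e(G) ^ 2 := sub_le_self _ (sq_nonneg _)
  rw [Sym2.eq_swap] at hhc
  linarith

theorem IsEndQuadrangle.edgesMeeting_subset (hq : IsEndQuadrangle G h a b c) :
    edgesMeeting G {a, b, c} ⊆ {s(h, a), s(a, b), s(b, c), s(c, h)} :=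
  edgesMeeting_subset_iff.2 <| by
    rintro x (rfl | rfl | rfl) y hy <;>
      rcases hq.attachedAt _ (by simp) y hy with (rfl | rfl | rfl) | rfl <;>
      first
        | exact absurd rfl hy.ne
        | exact absurd hy hq.not_adj_ac
        | exact absurd hy.symm hq.not_adj_ac
        | exact absurd hy.symm hq.not_adj_hb
        | simp [Sym2.eq_swap]

theorem IsEndQuadrangle.edgeWeight_hub_le (hG : G.Connected) (hm : 4 ≤ #G.edgeFinset)
    (hq : IsEndQuadrangle G h a b c) : edgeWeight G s(h, a) ≤ 8 * e(G) - 16 := by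
  have hT : #{s(h, a), s(a, b), s(b, c)} = 3 := by
    rw [card_eq_three]
    exact ⟨_, _, _, by simp [hq.ha.ne, hq.hb], by simp [hq.hb, hq.ab.ne],
      by simp [hq.ab.ne, hq.ac], rfl⟩
  have := hq.attachedAt.edgeWeight_le hG (u := h) (T := {s(h, a), s(a, b), s(b, c)}) (.inl rfl)
    (.inl rfl) (by simp [SimpleGraph.dist_eq_one_iff_adj.2 hq.ha])
    (two_le_mEqui_of_quadrangle hG hq.ha hq.ab hq.bc hq.ch hq.hb hq.ac)
    (fun e he heT => ?_) (by rw [hT]; omega)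
  · push_cast [hT] at this
    linarith
  · obtain rfl : e = s(c, h) := by
      have := hq.edgesMeeting_subset he
      simp only [mem_insert, mem_singleton] at this heT
      tauto
    exact eDist_lt_of_mem_of_notMem hG (Sym2.mem_mk_right c h) (by simp [hq.ac, hq.ha.ne'])

theorem IsEndQuadrangle.edgeWeight_le (hG : G.Connected) (hm : 4 ≤ #G.edgeFinset)
    (hq : IsEndQuadrangle G h a b c) : edgeWeight G s(a, b) ≤ 8 * e(G) - 16 := by
  have hT : #{s(a, b), s(b, c), s(c, h)} = 3 := by
    rw [card_eq_three]
    exact ⟨_, _, _, by simp [hq.ab.ne, hq.ac], by simp [hq.ha.ne', hq.ac],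
      by simp [hq.bc.ne, hq.hb.symm], rfl⟩
  have hlt : G.dist h a < G.dist h b :=
    (SimpleGraph.dist_eq_one_iff_adj.2 hq.ha).trans_lt
      (hG.one_lt_dist_of_ne_of_not_adj hq.hb hq.not_adj_hb)
  have := hq.attachedAt.edgeWeight_le hG (u := a) (v := b) (T := {s(a, b), s(b, c), s(c, h)})
    (by simp) (by simp) hlt
    (two_le_mEqui_of_quadrangle hG hq.ab hq.bc hq.ch hq.ha hq.ac hq.hb.symm)
    (fun e he heT => ?_) (by rw [hT]; omega)
  · push_cast [hT] at this
    linarith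
  · obtain rfl : e = s(h, a) := by
      have := hq.edgesMeeting_subset he
      simp only [mem_insert, mem_singleton] at this heT
      tauto
    exact eDist_lt_of_mem_of_notMem hG (Sym2.mem_mk_right h a) (by simp [hq.ab.ne', hq.hb.symm])

theorem IsEndQuadrangle.branchWeight_le (hG : G.Connected) (hm : 4 ≤ #G.edgeFinset)
    (hq : IsEndQuadrangle G h a b c) :
    branchWeight G {a, b, c} ≤ 4 * (8 * e(G) - 16) := by
  have hsum := branchWeight_le_sum hq.edgesMeeting_subset
  rw [sum_quadrangle_edges hq.ha hq.ab hq.bc hq.ch hq.hb hq.ac] at hsum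
  have hha := hq.edgeWeight_hub_le hG hm
  have hab := hq.edgeWeight_le hG hm
  have hhc := hq.symm.edgeWeight_hub_le hG hm
  have hcb := hq.symm.edgeWeight_le hG hm
  rw [Sym2.eq_swap] at hhc hcb
  linarith

end AttachedSets

section TailBundle

/-- The vertices of `tailBundle`: the hub, the further vertices of the cycles, the pendant
neighbours of the hub and the vertices of the tail. -/
inductive TailBundleVertex (k : ℕ) (len : Fin k → ℕ) (P : Type*) (q : ℕ)
  | hub
  | onCycle (i : Fin k) (a : Fin (len i - 1))
  | leaf (x : P)
  | onTail (j : Fin q)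

open TailBundleVertex

variable {k q : ℕ} {len : Fin k → ℕ} {P : Type*}

/-- The bundle of cycles of lengths `len i` at a common hub with pendant edges at the hub indexed
by `P` and with a path of length `q` attached to the hub. It is a bundle in the sense of
`bundleGraph` for `q = 0` and the graph `GStar1` for `q = 2`. -/
def tailBundle (k : ℕ) (len : Fin k → ℕ) (P : Type*) (q : ℕ) :
    SimpleGraph (TailBundleVertex k len P q) :=
  SimpleGraph.fromRel fun
    | hub, onCycle i a => a.val = 0 ∨ a.val = len i - 2
    | hub, leaf _ => True
    | hub, onTail j => j.val = 0
    | onCycle i a, onCycle j b => i = j ∧ a.val + 1 = b.val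
    | onTail i, onTail j => i.val + 1 = j.val
    | _, _ => False

/-- The vertices of `tailBundle` as the sum type on which `bundleGraph` and `GStar1` live. -/
def TailBundleVertex.equivSum : TailBundleVertex k len P q ≃
    Unit ⊕ ((Σ i : Fin k, Fin (len i - 1)) ⊕ (P ⊕ Fin q)) where
  toFun
    | hub => .inl ()
    | onCycle i a => .inr (.inl ⟨i, a⟩)
    | leaf x => .inr (.inr (.inl x))
    | onTail j => .inr (.inr (.inr j))
  invFun
    | .inl _ => hub
    | .inr (.inl ⟨i, a⟩) => onCycle i a
    | .inr (.inr (.inl x)) => leaf x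
    | .inr (.inr (.inr j)) => onTail j
  left_inv x := by cases x <;> rfl
  right_inv := by rintro (_ | _ | _ | _) <;> rfl

/-- A `tailBundle` without a tail is a bundle. -/
def tailBundleIsoBundleGraph {p : ℕ} (e : P ≃ Fin p) :
    tailBundle k len P 0 ≃g bundleGraph k len p where
  toEquiv := equivSum.trans (.sumCongr (.refl _) (.sumCongr (.refl _)
    ((Equiv.sumEmpty _ _).trans e)))
  map_rel_iff' {x y} := by
    rcases x with _ | ⟨i, a⟩ | x | j <;> rcases y with _ | ⟨i', a'⟩ | x' | j' <;>
      first | exact j.elim0 | exact j'.elim0 | simp [tailBundle, bundleGraph, equivSum]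

/-- The graph `GStar1` is a `tailBundle` with a tail of length two. -/
def tailBundleIsoGStar1 {n : ℕ} (e : P ≃ Fin (n - 3 * k - 3)) :
    tailBundle k (fun _ => 4) P 2 ≃g GStar1 n k where
  toEquiv := equivSum.trans (.sumCongr (.refl _) (.sumCongr (.refl _) (.sumCongr e (.refl _))))
  map_rel_iff' {x y} := by
    rcases x with _ | ⟨i, a⟩ | x | j <;> rcases y with _ | ⟨i', a'⟩ | x' | j' <;>
      simp [tailBundle, GStar1, equivSum]
    omega

theorem nonempty_iso_bundleGraph_congr {V : Type*} {G : SimpleGraph V} {len' : Fin k → ℕ}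
    {p p' : ℕ} (hlen : ∀ i, len i = len' i) (hp : p = p')
    (h : Nonempty (G ≃g bundleGraph k len p)) : Nonempty (G ≃g bundleGraph k len' p') := by
  obtain rfl : len = len' := funext hlen
  rwa [← hp]

theorem nonempty_iso_of_injective {V W : Type*} [Nontrivial V] {G : SimpleGraph V}
    {H : SimpleGraph W} {f : W → V} (hG : G.Preconnected) (hf : Function.Injective f)
    (hadj : ∀ ⦃a b⦄, H.Adj a b → G.Adj (f a) (f b))
    (hcover : ∀ ⦃x y⦄, G.Adj x y → ∃ a b, H.Adj a b ∧ s(x, y) = s(f a, f b)) :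
    Nonempty (H ≃g G) := by
  have hsurj : Function.Surjective f := fun x => by
    obtain ⟨y, hxy⟩ := hG.exists_adj_of_nontrivial x
    obtain ⟨a, b, -, hs⟩ := hcover hxy
    rcases Sym2.eq_iff.1 hs with ⟨rfl, -⟩ | ⟨rfl, -⟩
    exacts [⟨a, rfl⟩, ⟨b, rfl⟩]
  refine ⟨Equiv.ofBijective f ⟨hf, hsurj⟩, fun {a b} => ⟨fun hab => ?_, fun hab => hadj hab⟩⟩
  obtain ⟨a', b', hab', hs⟩ := hcover hab
  rcases Sym2.eq_iff.1 hs with ⟨ha, hb⟩ | ⟨ha, hb⟩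
  · rwa [hf ha, hf hb]
  · rw [hf ha, hf hb]
    exact hab'.symm

end TailBundle

section BundlePresentation

open TailBundleVertex

variable {V : Type*} {G : SimpleGraph V} {h u x y : V} {k q : ℕ} {len : Fin k → ℕ}

theorem notMem_support_of_isLeafAt {a : V} {p : G.Walk a a} (hp : p.IsCycle)
    (hx : IsLeafAt G u x) : x ∉ p.support := fun hmem => by
  have htwo := hp.ncard_neighborSet_toSubgraph_eq_two hmem
  have hsub : p.toSubgraph.neighborSet x ⊆ {u} := fun y hy => hx.2 y hy.adj_sub
  have := Set.ncard_le_ncard hsub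
  rw [htwo, Set.ncard_singleton] at this
  omega

/-- The path `h`, `tail 0`, `tail 1`, … is attached to the rest of the graph only at `h`, and it
consists of bridges. Pendant edges at `h` are excluded. -/
structure IsTail (G : SimpleGraph V) (h : V) (tail : Fin q → V) : Prop where
  injective : Function.Injective tail
  ne : ∀ j, tail j ≠ h
  not_isLeafAt : ∀ j, ¬IsLeafAt G h (tail j)
  adj : ∀ j, j.val = 0 → G.Adj h (tail j)
  adj_succ : ∀ i j, i.val + 1 = j.val → G.Adj (tail i) (tail j)
  isBridge : ∀ j y, G.Adj (tail j) y → G.IsBridge s(tail j, y)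
  cover : ∀ j y, G.Adj (tail j) y → (∃ i, i.val = 0 ∧ s(tail j, y) = s(h, tail i)) ∨
    ∃ i i', i.val + 1 = i'.val ∧ s(tail j, y) = s(tail i, tail i')

/-- A description of `G` as a bundle with a tail: cycles of lengths `len i` through the hub `h`, all
of whose other vertices have their neighbours on the cycle, such that every edge which lies on none
of them joins `h` to a pendant vertex or meets the tail. -/
structure BundlePresentation (G : SimpleGraph V) (h : V) (len : Fin k → ℕ) (tail : Fin q → V) where
  cycle : Fin k → G.Walk h h
  isCycle : ∀ i, (cycle i).IsCycle
  length_cycle : ∀ i, (cycle i).length = len i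
  mem_edges_of_adj : ∀ i, ∀ x ∈ (cycle i).support, x ≠ h → ∀ y, G.Adj x y →
    s(x, y) ∈ (cycle i).edges
  eq_of_mem_edges : ∀ ⦃i j e⦄, e ∈ (cycle i).edges → e ∈ (cycle j).edges → i = j
  isTail : IsTail G h tail
  cover : ∀ e ∈ G.edgeSet, (∃ i, e ∈ (cycle i).edges) ∨ (∃ z, IsLeafAt G h z ∧ e = s(h, z)) ∨
    ∃ j, tail j ∈ e

namespace BundlePresentation

variable {tail : Fin q → V} (B : BundlePresentation G h len tail)

/-- The vertex of `G` represented by a vertex of the model `tailBundle`. -/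
def vertexMap : TailBundleVertex k len {x // IsLeafAt G h x} q → V
  | hub => h
  | onCycle i a => (B.cycle i).getVert (a + 1)
  | leaf x => x
  | onTail j => tail j

theorem three_le (B : BundlePresentation G h len tail) (i : Fin k) : 3 ≤ len i :=
  B.length_cycle i ▸ (B.isCycle i).three_le_length

theorem getVert_ne (i : Fin k) (a : Fin (len i - 1)) : (B.cycle i).getVert (a + 1) ≠ h := by
  have hlen := B.length_cycle i
  have ha := a.isLt
  intro heq
  have := (B.isCycle i).getVert_injOn ⟨by omega, by omega⟩ ⟨by omega, by omega⟩
    (heq.trans (B.cycle i).getVert_length.symm)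
  omega

theorem eq_of_mem_support {i j : Fin k} (hi : x ∈ (B.cycle i).support)
    (hj : x ∈ (B.cycle j).support) (hx : x ≠ h) : i = j := by
  obtain ⟨_, he, y, rfl⟩ :=
    (SimpleGraph.Walk.mem_support_iff_exists_mem_edges_of_not_nil (B.isCycle i).not_nil).1 hi
  exact B.eq_of_mem_edges he
    (B.mem_edges_of_adj j x hj hx y ((B.cycle i).adj_of_mem_edges he))

theorem tail_notMem_support (i : Fin k) (j : Fin q) : tail j ∉ (B.cycle i).support := fun hj => by
  obtain ⟨_, he, y, rfl⟩ :=
    (SimpleGraph.Walk.mem_support_iff_exists_mem_edges_of_not_nil (B.isCycle i).not_nil).1 hj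
  have hbridge := B.isTail.isBridge j y ((B.cycle i).adj_of_mem_edges he)
  exact hbridge.notMem_edges_of_isCycle (B.isCycle i) he

theorem vertexMap_injective : Function.Injective B.vertexMap := by
  have hmem (i a) : (B.cycle i).getVert (a + 1) ∈ (B.cycle i).support :=
    (B.cycle i).getVert_mem_support _
  rintro (_ | ⟨i, a⟩ | x | j) (_ | ⟨i', a'⟩ | x' | j') heq <;> simp only [vertexMap] at heq
  · rfl
  · exact absurd heq.symm (B.getVert_ne i' a')
  · exact absurd heq x'.2.1.ne
  · exact absurd heq.symm (B.isTail.ne j')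
  · exact absurd heq (B.getVert_ne i a)
  · obtain rfl := B.eq_of_mem_support (hmem i a) (heq ▸ hmem i' a') (B.getVert_ne i a)
    have hlen := B.length_cycle i
    have := (B.isCycle i).getVert_injOn ⟨by omega, by omega⟩ ⟨by omega, by omega⟩ heq
    rw [Fin.ext (Nat.add_right_cancel this)]
  · exact absurd (heq ▸ hmem i a) (notMem_support_of_isLeafAt (B.isCycle i) x'.2)
  · exact absurd (heq ▸ hmem i a) (B.tail_notMem_support i j')
  · exact absurd heq.symm x.2.1.ne
  · exact absurd (heq ▸ hmem i' a') (notMem_support_of_isLeafAt (B.isCycle i') x.2)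
  · rw [Subtype.ext heq]
  · exact absurd (heq ▸ x.2) (B.isTail.not_isLeafAt j')
  · exact absurd heq (B.isTail.ne j)
  · exact absurd (heq ▸ hmem i' a') (B.tail_notMem_support i' j)
  · exact absurd (heq ▸ x'.2) (B.isTail.not_isLeafAt j)
  · rw [B.isTail.injective heq]

theorem adj_getVert (i : Fin k) (a : Fin (len i - 1)) (ha : a.val = 0 ∨ a.val = len i - 2) :
    G.Adj h ((B.cycle i).getVert (a + 1)) := by
  have hlen := B.length_cycle i
  have h3 := B.three_le i
  rcases ha with ha | ha
  · simpa [ha] using (B.cycle i).adj_getVert_succ (i := 0) (by omega)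
  · have hadj := (B.cycle i).adj_getVert_succ (i := a + 1) (by omega)
    rw [show (a : ℕ) + 1 + 1 = (B.cycle i).length by omega, SimpleGraph.Walk.getVert_length] at hadj
    exact hadj.symm

theorem adj_vertexMap ⦃a b : TailBundleVertex k len {x // IsLeafAt G h x} q⦄
    (hab : (tailBundle k len _ q).Adj a b) : G.Adj (B.vertexMap a) (B.vertexMap b) := by
  have hcycle (i) (a a' : Fin (len i - 1)) (haa' : a.val + 1 = a'.val) :
      G.Adj ((B.cycle i).getVert (a + 1)) ((B.cycle i).getVert (a' + 1)) := by
    have hlen := B.length_cycle i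
    exact haa' ▸ (B.cycle i).adj_getVert_succ (by omega)
  rcases a with _ | ⟨i, a⟩ | x | j <;> rcases b with _ | ⟨i', a'⟩ | x' | j' <;>
    simp only [tailBundle, SimpleGraph.fromRel_adj, or_false, false_or, and_false, or_self] at hab
  · exact B.adj_getVert i' a' hab.2
  · exact x'.2.1
  · exact B.isTail.adj j' hab.2
  · exact (B.adj_getVert i a hab.2).symm
  · rcases hab.2 with ⟨rfl, haa'⟩ | ⟨rfl, haa'⟩
    · exact hcycle i a a' haa'
    · exact (hcycle i' a' a haa').symm
  · exact x.2.1.symm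
  · exact (B.isTail.adj j hab.2).symm
  · exact hab.2.elim (B.isTail.adj_succ j j') fun hjj' => (B.isTail.adj_succ j' j hjj').symm

theorem exists_onCycle_of_mem_edges {i : Fin k} (he : s(x, y) ∈ (B.cycle i).edges) :
    ∃ a b, (tailBundle k len _ q).Adj a b ∧ s(x, y) = s(B.vertexMap a, B.vertexMap b) := by
  obtain ⟨t, ht, hs⟩ := (B.cycle i).mk_mem_edges_iff_exists.1 he
  have hlen := B.length_cycle i
  have h3 := B.three_le i
  rw [← hs]
  obtain rfl | h0 := t.eq_zero_or_pos
  · exact ⟨hub, onCycle i ⟨0, by omega⟩, by simp [tailBundle], by simp [vertexMap]⟩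
  obtain ⟨t, rfl⟩ := Nat.exists_eq_add_of_lt h0
  rw [zero_add] at ht ⊢
  obtain hlast | hlt : t + 1 + 1 = (B.cycle i).length ∨ t + 1 < len i - 1 := by omega
  · refine ⟨onCycle i ⟨t, by omega⟩, hub, by simp [tailBundle]; omega, ?_⟩
    simp only [vertexMap, hlast, SimpleGraph.Walk.getVert_length]
  · exact ⟨onCycle i ⟨t, by omega⟩, onCycle i ⟨t + 1, hlt⟩, by simp [tailBundle], rfl⟩

theorem exists_adj_of_adj ⦃x y : V⦄ (hxy : G.Adj x y) :
    ∃ a b, (tailBundle k len _ q).Adj a b ∧ s(x, y) = s(B.vertexMap a, B.vertexMap b) := by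
  rcases B.cover s(x, y) hxy with ⟨i, hi⟩ | ⟨z, hz, hs⟩ | ⟨j, z, hs⟩
  · exact B.exists_onCycle_of_mem_edges hi
  · exact ⟨hub, leaf ⟨z, hz⟩, by simp [tailBundle], hs⟩
  have hjz : G.Adj (tail j) z := by rwa [← SimpleGraph.mem_edgeSet, ← hs]
  rw [hs]
  rcases B.isTail.cover j z hjz with ⟨i, hi, hs⟩ | ⟨i, i', hii', hs⟩
  · exact ⟨hub, onTail i, by simp [tailBundle, hi], hs⟩
  · exact ⟨onTail i, onTail i', by simp [tailBundle, hii', Fin.ext_iff]; omega, hs⟩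

theorem nonempty_iso (B : BundlePresentation G h len tail) [Nontrivial V] (hG : G.Connected) :
    Nonempty (tailBundle k len {x // IsLeafAt G h x} q ≃g G) :=
  nonempty_iso_of_injective hG.preconnected B.vertexMap_injective B.adj_vertexMap
    B.exists_adj_of_adj

end BundlePresentation

end BundlePresentation

section Hub

variable {V : Type*} {G : SimpleGraph V} {h u v w x y : V} {k q : ℕ} {len : Fin k → ℕ}
  {tail : Fin q → V} {C : Finset (Sym2 V)} {e : Sym2 V}

theorem IsEndCycle.mem_of_adj (hC : IsEndCycle G h C) (he : e ∈ C) (hx : x ∈ e) (hxh : x ≠ h)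
    (hxy : G.Adj x y) : s(x, y) ∈ C := by
  obtain ⟨p, -, rfl, hclosed⟩ := hC
  obtain ⟨z, rfl⟩ := hx
  rw [List.mem_toFinset] at he ⊢
  exact hclosed x (p.fst_mem_support_of_mem_edges he) hxh y hxy

theorem IsLeafAt.isBridge (hv : IsLeafAt G u v) : G.IsBridge s(v, u) := by
  rw [SimpleGraph.isBridge_iff_forall_cycle_notMem (G.mem_edgeSet.2 hv.1.symm)]
  exact fun a p hp he => notMem_support_of_isLeafAt hp hv (p.fst_mem_support_of_mem_edges he)

theorem isTail_elim0 (G : SimpleGraph V) (h : V) : IsTail G h Fin.elim0 :=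
  ⟨fun i => i.elim0, fun i => i.elim0, fun i => i.elim0, fun i => i.elim0, fun i => i.elim0,
    fun i => i.elim0, fun i => i.elim0⟩

theorem IsPendantPath.isTail (hp : IsPendantPath G u v w) (hb : G.IsBridge s(u, v)) :
    IsTail G u ![v, w] where
  injective := by
    have := hp.isLeafAt.1.ne
    intro i j hij
    fin_cases i <;> fin_cases j <;> simp_all
  ne := by simpa [Fin.forall_fin_two] using ⟨hp.adj.ne', hp.ne⟩
  not_isLeafAt := by
    simp only [Fin.forall_fin_two, Matrix.cons_val_zero, Matrix.cons_val_one]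
    exact ⟨fun hv => hp.ne (hv.2 w hp.isLeafAt.1), fun hw =>
      hp.adj.ne (hp.isLeafAt.2 u hw.1.symm)⟩
  adj := by simp [hp.adj]
  adj_succ := by simp [Fin.forall_fin_two, hp.isLeafAt.1]
  isBridge := by
    simp only [Fin.forall_fin_two, Matrix.cons_val_zero, Matrix.cons_val_one]
    refine ⟨fun y hy => ?_, fun y hy => ?_⟩
    · rcases hp.eq_or_eq_of_adj y hy with rfl | rfl
      · rwa [Sym2.eq_swap]
      · rw [Sym2.eq_swap]
        exact hp.isLeafAt.isBridge
    · rw [hp.isLeafAt.2 y hy]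
      exact hp.isLeafAt.isBridge
  cover := by
    simp only [Fin.forall_fin_two, Matrix.cons_val_zero, Matrix.cons_val_one]
    refine ⟨fun y hy => ?_, fun y hy => .inr ⟨0, 1, rfl, ?_⟩⟩
    · rcases hp.eq_or_eq_of_adj y hy with rfl | rfl
      · exact .inl ⟨0, rfl, Sym2.eq_swap⟩
      · exact .inr ⟨0, 1, rfl, rfl⟩
    · rw [hp.isLeafAt.2 y hy]
      exact Sym2.eq_swap

theorem IsTail.mem_range_of_adj (ht : IsTail G h tail) {j : Fin q} (hy : G.Adj (tail j) y)
    (hyh : y ≠ h) : y ∈ Set.range tail := by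
  have hmem : y ∈ s(tail j, y) := Sym2.mem_mk_right _ _
  rcases ht.cover j y hy with ⟨i, -, hs⟩ | ⟨i, i', -, hs⟩ <;> rw [hs, Sym2.mem_iff] at hmem
  · exact ⟨i, (hmem.resolve_left hyh).symm⟩
  · rcases hmem with rfl | rfl <;> exact Set.mem_range_self _

/-- `h` is a candidate for the hub of `G`: a bridge joins `h` to the vertex `v`, which is pendant
or lies on a tail at `h`, all other bridges are pendant edges and every cycle is an end cycle. -/
structure IsHub (G : SimpleGraph V) (h v : V) (tail : Fin q → V) : Prop where
  isTail : IsTail G h tail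
  adj : G.Adj h v
  isBridge : G.IsBridge s(h, v)
  isLeafAt_or_mem : IsLeafAt G h v ∨ v ∈ Set.range tail
  isLeafAt_of_ne : ∀ e ∈ G.edgeSet, G.IsBridge e → e ≠ s(h, v) →
    ∃ u w, IsLeafAt G u w ∧ e = s(u, w)
  isEndCycle : ∀ C, IsCycleEdgeSet G C → ∃ h', IsEndCycle G h' C

theorem IsHub.isLeafAt_of_isBridge (H : IsHub G h v tail) (hx : G.Adj h x)
    (hb : G.IsBridge s(h, x)) (hxv : x ≠ v) : IsLeafAt G h x := by
  obtain ⟨u, w, huw, hs⟩ := H.isLeafAt_of_ne s(h, x) hx hb fun hs => hxv (Sym2.congr_right.1 hs)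
  rcases Sym2.eq_iff.1 hs with ⟨rfl, rfl⟩ | ⟨rfl, rfl⟩
  · exact huw
  · exact absurd (huw.2 v H.adj).symm hxv

-- If the end cycle were attached elsewhere, all edges at `h` would lie on it, even the bridge.
theorem IsHub.isEndCycle_of_mem (H : IsHub G h v tail) (hC : IsCycleEdgeSet G C) (he : e ∈ C)
    (hh : h ∈ e) : IsEndCycle G h C := by
  obtain ⟨h', hend⟩ := H.isEndCycle C hC
  obtain rfl : h = h' := by_contra fun hne =>
    (isBridge_iff_forall_isCycleEdgeSet H.adj).1 H.isBridge C hC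
      (hend.mem_of_adj he hh hne H.adj)
  exact hend

theorem IsHub.vertex_cases (hG : G.Connected) (H : IsHub G h v tail) (x : V) :
    x = h ∨ x ∈ Set.range tail ∨ IsLeafAt G h x ∨ ∃ C, IsEndCycle G h C ∧ ∃ e ∈ C, x ∈ e := by
  induction (SimpleGraph.reachable_iff_reflTransGen h x).1 (hG.preconnected h x) with
  | refl => exact .inl rfl
  | @tail b c _ hbc ih =>
    by_cases hch : c = h
    · exact .inl hch
    by_cases hbh : b = h
    · subst hbh
      by_cases hcv : c = v
      · exact hcv ▸ H.isLeafAt_or_mem.elim (fun hv => .inr (.inr (.inl hv))) (.inr ∘ .inl)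
      by_cases hb : G.IsBridge s(b, c)
      · exact .inr (.inr (.inl (H.isLeafAt_of_isBridge hbc hb hcv)))
      · rw [isBridge_iff_forall_isCycleEdgeSet hbc] at hb
        push Not at hb
        obtain ⟨C, hC, he⟩ := hb
        exact .inr (.inr (.inr ⟨C, H.isEndCycle_of_mem hC he (Sym2.mem_mk_left b c), _, he,
          Sym2.mem_mk_right b c⟩))
    rcases ih with hb | ⟨j, rfl⟩ | hb | ⟨C, hC, e, he, hb⟩
    · exact absurd hb hbh
    · exact .inr (.inl (H.isTail.mem_range_of_adj hbc hch))
    · exact absurd (hb.2 c hbc) hch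
    · exact .inr (.inr (.inr ⟨C, hC, _, hC.mem_of_adj he hb hbh hbc, Sym2.mem_mk_right b c⟩))

theorem exists_mem_ne_of_mem_edgeSet (he : e ∈ G.edgeSet) (h : V) :
    ∃ x ≠ h, ∃ y, G.Adj x y ∧ e = s(x, y) := by
  induction e with | h x y
  by_cases hx : x = h
  · exact ⟨y, hx ▸ SimpleGraph.Adj.ne' he, x, SimpleGraph.Adj.symm he, Sym2.eq_swap⟩
  · exact ⟨x, hx, y, he, rfl⟩

theorem IsHub.edge_cases (hG : G.Connected) (H : IsHub G h v tail) (he : e ∈ G.edgeSet) :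
    (∃ C, IsEndCycle G h C ∧ e ∈ C) ∨ (∃ z, IsLeafAt G h z ∧ e = s(h, z)) ∨ ∃ j, tail j ∈ e := by
  obtain ⟨x, hxh, y, hxy, rfl⟩ := exists_mem_ne_of_mem_edgeSet he h
  rcases H.vertex_cases hG x with hx | ⟨j, rfl⟩ | hx | ⟨C, hC, f, hf, hx⟩
  · exact absurd hx hxh
  · exact .inr (.inr ⟨j, Sym2.mem_mk_left _ _⟩)
  · refine .inr (.inl ⟨x, hx, ?_⟩)
    rw [hx.2 y hxy, Sym2.eq_swap]
  · exact .inl ⟨C, hC, hC.mem_of_adj hf hx hxh hxy⟩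

theorem IsHub.isEndCycle_hub (hG : G.Connected) (hQ : EdgeDisjointCycles G)
    (H : IsHub G h v tail) (hC : IsCycleEdgeSet G C) : IsEndCycle G h C := by
  obtain ⟨e, he⟩ := hC.nonempty
  have hedge := hC.mem_edgeSet he
  have hb := fun hb => (isBridge_iff_forall_isCycleEdgeSet hedge).1 hb C hC he
  rcases H.edge_cases hG hedge with ⟨D, hD, heD⟩ | ⟨z, -, rfl⟩ | ⟨j, y, rfl⟩
  · exact hQ hC hD.isCycleEdgeSet e he heD ▸ hD
  · exact H.isEndCycle_of_mem hC he (Sym2.mem_mk_left h z)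
  · exact absurd (H.isTail.isBridge j y hedge) hb

theorem IsHub.nonempty_bundlePresentation (hG : G.Connected) (hQ : EdgeDisjointCycles G)
    (H : IsHub G h v tail) (φ : Fin k ≃ {C // IsCycleEdgeSet G C}) (hlen : ∀ i, #(φ i).1 = len i) :
    Nonempty (BundlePresentation G h len tail) := by
  choose p hp hpC hclosed using fun i => H.isEndCycle_hub hG hQ (φ i).2
  have mem_edges_iff (i e) : e ∈ (p i).edges ↔ e ∈ (φ i).1 := by rw [← hpC i, List.mem_toFinset]
  refine ⟨⟨p, hp, fun i => ?_, hclosed, fun i j e hi hj => ?_, H.isTail, fun e he => ?_⟩⟩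
  · rw [← hlen, ← hpC i, card_edges_toFinset_of_isCycle (hp i)]
  · rw [mem_edges_iff] at hi hj
    exact φ.injective (Subtype.ext (hQ (φ i).2 (φ j).2 e hi hj))
  · refine (H.edge_cases hG he).imp_left fun ⟨C, hC, heC⟩ => ⟨φ.symm ⟨C, hC.isCycleEdgeSet⟩, ?_⟩
    rwa [mem_edges_iff, φ.apply_symm_apply]

theorem IsHub.nonempty_iso (hG : G.Connected) (hQ : EdgeDisjointCycles G)
    (H : IsHub G h v tail) (φ : Fin k ≃ {C // IsCycleEdgeSet G C}) (hlen : ∀ i, #(φ i).1 = len i) :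
    Nonempty (tailBundle k len {x // IsLeafAt G h x} q ≃g G) :=
  let ⟨B⟩ := H.nonempty_bundlePresentation hG hQ φ hlen
  have : Nontrivial V := ⟨h, v, H.adj.ne⟩
  B.nonempty_iso hG

end Hub

section Structure

variable {V : Type*} [Fintype V] {G : SimpleGraph V} {k q : ℕ} {len : Fin k → ℕ}

theorem card_tailBundleVertex {P : Type*} [Fintype P] (φ : TailBundleVertex k len P q ≃ V) :
    Fintype.card V = 1 + (∑ i, (len i - 1) + (Fintype.card P + q)) := by
  rw [← Fintype.card_congr (TailBundleVertex.equivSum.symm.trans φ)]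
  simp only [Fintype.card_sum, Fintype.card_unit, Fintype.card_sigma, Fintype.card_fin]

theorem EdgeDisjointCycles.exists_isBridge (hQ : EdgeDisjointCycles G)
    (h4 : ∀ C, IsCycleEdgeSet G C → #C ≤ 4) (hm : 4 * #(cycleEdgeSets G) < #G.edgeFinset) :
    ∃ e ∈ G.edgeSet, G.IsBridge e := by
  by_contra! hb
  have hsum := hQ.sum_edgeFinset fun _ => 1
  rw [filter_eq_empty_iff.2 fun e he => hb e (SimpleGraph.mem_edgeFinset.1 he), sum_empty,
    zero_add] at hsum
  simp only [sum_const, nsmul_eq_mul, mul_one] at hsum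
  have := sum_le_card_nsmul (cycleEdgeSets G) (fun C => #C) 4 fun C hC =>
    h4 C (mem_cycleEdgeSets.1 hC)
  rw [smul_eq_mul] at this
  norm_cast at hsum
  omega

theorem nonempty_iso_bundleGraph (hG : G.Connected) (hQ : EdgeDisjointCycles G)
    (hm : 4 * #(cycleEdgeSets G) < #G.edgeFinset) (φ : Fin k ≃ {C // IsCycleEdgeSet G C})
    (hlen : ∀ i, #(φ i).1 = len i) (h4 : ∀ i, len i ≤ 4)
    (hbridge : ∀ e ∈ G.edgeSet, G.IsBridge e → ∃ u v, IsLeafAt G u v ∧ e = s(u, v))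
    (hcycle : ∀ C, IsCycleEdgeSet G C → ∃ h, IsEndCycle G h C) {p : ℕ}
    (hp : Fintype.card V = 1 + (∑ i, (len i - 1) + p)) :
    Nonempty (G ≃g bundleGraph k len p) := by
  have hcard (C) (hC : IsCycleEdgeSet G C) : #C ≤ 4 := by
    have := hlen (φ.symm ⟨C, hC⟩)
    rw [φ.apply_symm_apply] at this
    exact this.trans_le (h4 _)
  obtain ⟨e, he, hb⟩ := hQ.exists_isBridge hcard hm
  obtain ⟨h, v, hv, rfl⟩ := hbridge e he hb
  have H : IsHub G h v Fin.elim0 :=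
    ⟨isTail_elim0 G h, hv.1, hb, .inl hv, fun e he hb _ => hbridge e he hb, hcycle⟩
  obtain ⟨ψ⟩ := H.nonempty_iso hG hQ φ hlen
  have := card_tailBundleVertex ψ.toEquiv
  exact ⟨ψ.symm.trans (tailBundleIsoBundleGraph (Fintype.equivFinOfCardEq (by omega)))⟩

end Structure

section Extremal

variable {V : Type*} [Fintype V] {G : SimpleGraph V} {j : Sym2 V ⊕ Finset (Sym2 V)}

theorem nonempty_fin_equiv_isCycleEdgeSet (G : SimpleGraph V) :
    Nonempty (Fin #(cycleEdgeSets G) ≃ {C // IsCycleEdgeSet G C}) :=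
  ⟨(cycleEdgeSets G).equivFin.symm.trans (Equiv.subtypeEquivRight fun _ => mem_cycleEdgeSets)⟩

theorem sum_fin_ite_add {M : Type*} [AddCommMonoid M] {k : ℕ} (hk : 0 < k) (x y : M) :
    ∑ i : Fin k, (if (i : ℕ) = 0 then x else y) + y = x + k • y := by
  obtain ⟨k, rfl⟩ := Nat.exists_eq_succ_of_ne_zero hk.ne'
  simp [Fin.sum_univ_succ, succ_nsmul, add_assoc]

theorem nonempty_iso_quadrangleBundle (hG : G.Connected) (hQ : EdgeDisjointCycles G)
    (hm : 4 * #(cycleEdgeSets G) < #G.edgeFinset) (hmin : ∀ i ∈ pieces G, IsMinimalPiece G i) :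
    Nonempty (G ≃g bundleGraph #(cycleEdgeSets G) (fun _ => 4)
      (Fintype.card V - 3 * #(cycleEdgeSets G) - 1)) := by
  have hcycle (C) (hC : IsCycleEdgeSet G C) := hmin (.inr C) (inr_mem_pieces.2 hC)
  have hcard := hQ.card_edgeFinset_add_one hG
  obtain ⟨φ⟩ := nonempty_fin_equiv_isCycleEdgeSet G
  refine nonempty_iso_bundleGraph hG hQ hm φ (fun i => (hcycle _ (φ i).2).1) (fun _ => le_rfl)
    (fun e he hb => hmin (.inl e) (inl_mem_pieces.2 ⟨he, hb⟩)) (fun C hC => (hcycle C hC).2) ?_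
  simp only [sum_const, card_univ, Fintype.card_fin, smul_eq_mul]
  omega

theorem nonempty_iso_triangleBundle (hG : G.Connected) (hQ : EdgeDisjointCycles G)
    (hm : 4 * #(cycleEdgeSets G) < #G.edgeFinset) (hj : j ∈ pieces G) (htri : IsTrianglePiece G j)
    (hmin : ∀ i ∈ pieces G, i ≠ j → IsMinimalPiece G i) :
    Nonempty (G ≃g bundleGraph #(cycleEdgeSets G) (fun i => if (i : ℕ) = 0 then 3 else 4)
      (Fintype.card V + #(cycleEdgeSets G) - 1 - (4 * #(cycleEdgeSets G) - 1))) := by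
  obtain ⟨C₀, h₀, hend, h3, rfl⟩ := htri
  have hC₀ := inr_mem_pieces.1 hj
  have hcycle (C) (hC : IsCycleEdgeSet G C) (hne : C ≠ C₀) :=
    hmin (.inr C) (inr_mem_pieces.2 hC) (Sum.inr_injective.ne hne)
  have hk : 0 < #(cycleEdgeSets G) := card_pos.2 ⟨C₀, mem_cycleEdgeSets.2 hC₀⟩
  obtain ⟨φ, hφ⟩ : ∃ φ : Fin #(cycleEdgeSets G) ≃ {C // IsCycleEdgeSet G C},
      φ ⟨0, hk⟩ = ⟨C₀, hC₀⟩ :=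
    let ⟨ψ⟩ := nonempty_fin_equiv_isCycleEdgeSet G
    ⟨(Equiv.swap ⟨0, hk⟩ (ψ.symm ⟨C₀, hC₀⟩)).trans ψ, by simp⟩
  refine nonempty_iso_bundleGraph hG hQ hm φ (fun i => ?_) (fun i => by split_ifs <;> omega)
    (fun e he hb => hmin (.inl e) (inl_mem_pieces.2 ⟨he, hb⟩) Sum.inl_ne_inr) (fun C hC => ?_) ?_
  · split_ifs with hi
    · rw [show i = ⟨0, hk⟩ from Fin.ext hi, hφ, h3]
    · refine (hcycle _ (φ i).2 fun h => hi ?_).1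
      rw [φ.injective ((Subtype.ext h).trans hφ.symm)]
  · by_cases hne : C = C₀
    · exact ⟨h₀, hne ▸ hend⟩
    · exact (hcycle C hC hne).2
  · have hcard := hQ.card_edgeFinset_add_one hG
    have := sum_fin_ite_add hk 2 3
    simp only [apply_ite (· - 1), Nat.reduceSub, smul_eq_mul] at this ⊢
    omega

theorem nonempty_iso_gStar1 (hG : G.Connected) (hQ : EdgeDisjointCycles G) (hj : j ∈ pieces G)
    (hpath : IsPathPiece G j) (hmin : ∀ i ∈ pieces G, i ≠ j → IsMinimalPiece G i) :
    Nonempty (G ≃g GStar1 (Fintype.card V) #(cycleEdgeSets G)) := by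
  obtain ⟨u, v, w, hp, rfl⟩ := hpath
  have hb := (inl_mem_pieces.1 hj).2
  have hcycle (C) (hC : IsCycleEdgeSet G C) :=
    hmin (.inr C) (inr_mem_pieces.2 hC) Sum.inr_ne_inl
  have H : IsHub G u v ![v, w] :=
    { isTail := hp.isTail hb
      adj := hp.adj
      isBridge := hb
      isLeafAt_or_mem := .inr ⟨0, rfl⟩
      isLeafAt_of_ne := fun e he hbe hne =>
        hmin (.inl e) (inl_mem_pieces.2 ⟨he, hbe⟩) (Sum.inl_injective.ne hne)
      isEndCycle := fun C hC => (hcycle C hC).2 }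
  obtain ⟨φ⟩ := nonempty_fin_equiv_isCycleEdgeSet G
  obtain ⟨ψ⟩ := H.nonempty_iso hG hQ φ (len := fun _ => 4) fun i => (hcycle _ (φ i).2).1
  have hcard := card_tailBundleVertex ψ.toEquiv
  simp only [sum_const, card_univ, Fintype.card_fin, smul_eq_mul] at hcard
  exact ⟨ψ.symm.trans (tailBundleIsoGStar1 (Fintype.equivFinOfCardEq (by omega)))⟩

end Extremal

section UpperBound

open TailBundleVertex

variable {V : Type*} {G : SimpleGraph V} {k q : ℕ} {len : Fin k → ℕ} {P : Type*} {i : Fin k}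

theorem isLeafAt_of_iso (φ : tailBundle k len P q ≃g G) (x : P) :
    IsLeafAt G (φ hub) (φ (leaf x)) := by
  refine ⟨φ.map_adj_iff.2 (by simp [tailBundle]), φ.surjective.forall.2 fun y hy => ?_⟩
  rw [φ.map_adj_iff] at hy
  cases y <;> simp [tailBundle] at hy ⊢

theorem isPendantPath_of_iso (φ : tailBundle k len P 2 ≃g G) :
    IsPendantPath G (φ hub) (φ (onTail 0)) (φ (onTail 1)) where
  adj := φ.map_adj_iff.2 (by simp [tailBundle])
  ne := by simp
  isLeafAt := by
    refine ⟨φ.map_adj_iff.2 (by simp [tailBundle]), φ.surjective.forall.2 fun y hy => ?_⟩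
    rw [φ.map_adj_iff] at hy
    cases y with
    | onTail j => fin_cases j <;> simp [tailBundle] at hy ⊢
    | _ => simp [tailBundle] at hy ⊢
  eq_or_eq_of_adj := φ.surjective.forall.2 fun y hy => by
    rw [φ.map_adj_iff] at hy
    cases y with
    | onTail j => fin_cases j <;> simp [tailBundle] at hy ⊢
    | _ => simp [tailBundle] at hy ⊢

theorem attachedAt_range_onCycle (φ : tailBundle k len P q ≃g G) (i : Fin k) :
    AttachedAt G (φ hub) (Set.range fun a => φ (onCycle i a)) := by
  rintro _ ⟨a, rfl⟩
  refine φ.surjective.forall.2 fun y hy => ?_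
  rw [φ.map_adj_iff] at hy
  cases y with
  | hub => exact .inr rfl
  | onCycle j b =>
    obtain rfl : i = j := by
      simp only [tailBundle, SimpleGraph.fromRel_adj] at hy
      tauto
    exact .inl ⟨b, rfl⟩
  | _ => simp [tailBundle] at hy

theorem range_onCycle_of_eq_three (φ : tailBundle k len P q ≃g G) (hi : len i = 3) :
    Set.range (fun a => φ (onCycle i a)) =
      {φ (onCycle i ⟨0, by omega⟩), φ (onCycle i ⟨1, by omega⟩)} := by
  have : (Set.univ : Set (Fin (len i - 1))) = {⟨0, by omega⟩, ⟨1, by omega⟩} := by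
    ext ⟨a, ha⟩
    simp
    omega
  rw [← Set.image_univ, this, Set.image_pair]

theorem isEndTriangle_of_iso (φ : tailBundle k len P q ≃g G) (hi : len i = 3) :
    IsEndTriangle G (φ hub) (φ (onCycle i ⟨0, by omega⟩)) (φ (onCycle i ⟨1, by omega⟩)) where
  ha := φ.map_adj_iff.2 (by simp [tailBundle])
  ac := φ.map_adj_iff.2 (by simp [tailBundle])
  ch := φ.map_adj_iff.2 (by simp [tailBundle, hi])
  attachedAt := range_onCycle_of_eq_three φ hi ▸ attachedAt_range_onCycle φ i

theorem range_onCycle_of_eq_four (φ : tailBundle k len P q ≃g G) (hi : len i = 4) :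
    Set.range (fun a => φ (onCycle i a)) = {φ (onCycle i ⟨0, by omega⟩),
      φ (onCycle i ⟨1, by omega⟩), φ (onCycle i ⟨2, by omega⟩)} := by
  have : (Set.univ : Set (Fin (len i - 1))) = {⟨0, by omega⟩, ⟨1, by omega⟩, ⟨2, by omega⟩} := by
    ext ⟨a, ha⟩
    simp
    omega
  rw [← Set.image_univ, this]
  simp [Set.image_insert_eq]

theorem isEndQuadrangle_of_iso (φ : tailBundle k len P q ≃g G) (hi : len i = 4) :
    IsEndQuadrangle G (φ hub) (φ (onCycle i ⟨0, by omega⟩)) (φ (onCycle i ⟨1, by omega⟩))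
      (φ (onCycle i ⟨2, by omega⟩)) where
  ha := φ.map_adj_iff.2 (by simp [tailBundle])
  ab := φ.map_adj_iff.2 (by simp [tailBundle])
  bc := φ.map_adj_iff.2 (by simp [tailBundle])
  ch := φ.map_adj_iff.2 (by simp [tailBundle, hi])
  hb := by simp
  ac := by simp
  not_adj_hb := φ.map_adj_iff.not.2 (by simp [tailBundle, hi])
  not_adj_ac := φ.map_adj_iff.not.2 (by simp [tailBundle])
  attachedAt := range_onCycle_of_eq_four φ hi ▸ attachedAt_range_onCycle φ i

variable [Fintype V] [Fintype P]

theorem sum_edgeWeight_le_of_iso (hG : G.Connected) (φ : tailBundle k len P q ≃g G) :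
    ∑ e ∈ G.edgeFinset, edgeWeight G e ≤
      ∑ i, branchWeight G (Set.range fun a => φ (onCycle i a)) +
        (Fintype.card P * (2 * e(G) - 1) + branchWeight G (Set.range fun j => φ (onTail j))) := by
  refine (sum_edgeWeight_le_sum_branchWeight (h := φ hub)
    (Sum.elim (fun i => Set.range fun a => φ (onCycle i a))
      (Sum.elim (fun x => {φ (leaf x)}) fun _ : Unit => Set.range fun j => φ (onTail j)))
    (φ.surjective.forall.2 fun x hx => ?_)).trans ?_
  · rcases x with _ | ⟨i, a⟩ | x | j
    · exact absurd rfl hx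
    · exact ⟨.inl i, a, rfl⟩
    · exact ⟨.inr (.inl x), rfl⟩
    · exact ⟨.inr (.inr ()), j, rfl⟩
  · have := sum_le_card_nsmul univ (fun x : P => branchWeight G {φ (leaf x)}) _ fun x _ =>
      (isLeafAt_of_iso φ x).branchWeight_le hG
    rw [nsmul_eq_mul, card_univ] at this
    simpa [Fintype.sum_sum_type] using this

end UpperBound

section Conclusion

open TailBundleVertex

variable {V : Type*} [Fintype V] {G : SimpleGraph V}

theorem sum_pieceExcess_le_of_iso_gStar1 (hG : G.Connected) (hQ : EdgeDisjointCycles G)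
    (hm : 4 ≤ #G.edgeFinset) (h : Nonempty (G ≃g GStar1 (Fintype.card V) #(cycleEdgeSets G))) :
    ∑ i ∈ pieces G, pieceExcess G i ≤ 4 * (e(G) - 2) := by
  obtain ⟨φ⟩ := h.map fun φ => (tailBundleIsoGStar1 (.refl _)).trans φ.symm
  have hcard := card_tailBundleVertex φ.toEquiv
  have hE := hQ.card_edgeFinset_add_one hG
  have hsum := sum_edgeWeight_le_of_iso hG φ
  have htail : (Set.range fun j => φ (onTail j)) = {φ (onTail 0), φ (onTail 1)} := by
    ext; simp [Fin.exists_fin_two, eq_comm]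
  have hpath := (isPendantPath_of_iso φ).branchWeight_le hG (by omega)
  have hcycles := sum_le_card_nsmul univ _ _ fun i _ =>
    (isEndQuadrangle_of_iso φ (i := i) rfl).branchWeight_le hG hm
  simp only [← range_onCycle_of_eq_four] at hcycles
  rw [hQ.sum_edgeWeight, htail] at hsum
  simp only [sum_const, card_univ, Fintype.card_fin, smul_eq_mul, nsmul_eq_mul]
    at hcard hcycles hsum
  have hp : ((Fintype.card V - 3 * #(cycleEdgeSets G) - 3 : ℕ) : ℤ) =
      e(G) - 4 * #(cycleEdgeSets G) - 2 := by omega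
  rw [hp] at hsum
  linarith

theorem sum_pieceExcess_le_of_iso_triangleBundle (hG : G.Connected) (hQ : EdgeDisjointCycles G)
    (hm : 4 ≤ #G.edgeFinset) (hk : 0 < #(cycleEdgeSets G)) {p : ℕ}
    (h : Nonempty (G ≃g bundleGraph #(cycleEdgeSets G) (fun i => if (i : ℕ) = 0 then 3 else 4) p)) :
    ∑ i ∈ pieces G, pieceExcess G i ≤ (e(G) - 3) * (e(G) - 15) := by
  obtain ⟨φ⟩ := h.map fun φ => (tailBundleIsoBundleGraph (.refl _)).trans φ.symm
  have hcard := card_tailBundleVertex φ.toEquiv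
  have hE := hQ.card_edgeFinset_add_one hG
  have hsum := sum_edgeWeight_le_of_iso hG φ
  have hcycle (i : Fin #(cycleEdgeSets G)) :
      branchWeight G (Set.range fun a => φ (onCycle i a)) ≤
        if (i : ℕ) = 0 then 2 * (6 * e(G) - 9) + e(G) ^ 2 else 4 * (8 * e(G) - 16) := by
    split_ifs with hi
    · rw [range_onCycle_of_eq_three φ (if_pos hi)]
      exact (isEndTriangle_of_iso φ (if_pos hi)).branchWeight_le hG (by omega)
    · rw [range_onCycle_of_eq_four φ (if_neg hi)]
      exact (isEndQuadrangle_of_iso φ (if_neg hi)).branchWeight_le hG hm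
  have hcycles := sum_le_sum fun i (_ : i ∈ univ) => hcycle i
  have htail : branchWeight G (Set.range fun j => φ (onTail j)) = 0 := by
    simp [branchWeight, edgesMeeting]
  have hlen := sum_fin_ite_add hk 2 3
  have hweight := sum_fin_ite_add hk (2 * (6 * e(G) - 9) + e(G) ^ 2) (4 * (8 * e(G) - 16))
  simp only [apply_ite (· - 1), Nat.reduceSub, Fintype.card_fin, smul_eq_mul] at hcard hlen
  have hp : (p : ℤ) = e(G) - 4 * #(cycleEdgeSets G) + 1 := by omega
  rw [hQ.sum_edgeWeight, htail, Fintype.card_fin, hp] at hsum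
  rw [nsmul_eq_mul] at hweight
  linarith

theorem sum_pieceExcess_eq_iff_of_twenty_le (hG : G.Connected) (hQ : EdgeDisjointCycles G)
    (h20 : 20 ≤ #G.edgeFinset) (hm : 4 * #(cycleEdgeSets G) < #G.edgeFinset)
    (hnot : ¬Nonempty (G ≃g bundleGraph #(cycleEdgeSets G) (fun _ => 4)
      (Fintype.card V - 3 * #(cycleEdgeSets G) - 1))) :
    4 * (e(G) - 2) ≤ ∑ i ∈ pieces G, pieceExcess G i ∧
      (∑ i ∈ pieces G, pieceExcess G i = 4 * (e(G) - 2) ↔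
        Nonempty (G ≃g GStar1 (Fintype.card V) #(cycleEdgeSets G))) := by
  have hmin := fun hmin => hnot (nonempty_iso_quadrangleBundle hG hQ hm hmin)
  obtain ⟨hle, heq⟩ :=
    (minimal_or_le_sum_of_twenty_le hG hQ (by exact_mod_cast h20)).resolve_left hmin
  refine ⟨hle, fun h => ?_, fun h => hle.antisymm' ?_⟩
  · obtain ⟨j, hj, hpath, hmin⟩ := heq h
    exact nonempty_iso_gStar1 hG hQ hj hpath hmin
  · exact sum_pieceExcess_le_of_iso_gStar1 hG hQ (by omega) h

theorem sum_pieceExcess_eq_iff_of_le_nineteen (hG : G.Connected) (hQ : EdgeDisjointCycles G)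
    (h15 : 15 < #G.edgeFinset) (h19 : #G.edgeFinset ≤ 19)
    (hm : 4 * #(cycleEdgeSets G) < #G.edgeFinset)
    (hnot : ¬Nonempty (G ≃g bundleGraph #(cycleEdgeSets G) (fun _ => 4)
      (Fintype.card V - 3 * #(cycleEdgeSets G) - 1))) :
    (e(G) - 3) * (e(G) - 15) ≤ ∑ i ∈ pieces G, pieceExcess G i ∧
      (∑ i ∈ pieces G, pieceExcess G i = (e(G) - 3) * (e(G) - 15) ↔
        Nonempty (G ≃g bundleGraph #(cycleEdgeSets G) (fun i => if (i : ℕ) = 0 then 3 else 4)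
          (Fintype.card V + #(cycleEdgeSets G) - 1 - (4 * #(cycleEdgeSets G) - 1)))) := by
  have hmin := fun hmin => hnot (nonempty_iso_quadrangleBundle hG hQ hm hmin)
  obtain ⟨hle, heq⟩ := (minimal_or_le_sum_of_le_nineteen hG hQ (by exact_mod_cast h15)
    (by exact_mod_cast h19)).resolve_left hmin
  refine ⟨hle, fun h => ?_, fun h => hle.antisymm' ?_⟩
  · obtain ⟨j, hj, htri, hmin⟩ := heq h
    exact nonempty_iso_triangleBundle hG hQ hm hj htri hmin
  · refine sum_pieceExcess_le_of_iso_triangleBundle hG hQ (by omega)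
      (Nat.pos_of_ne_zero fun hk => hnot ?_) h
    exact nonempty_iso_bundleGraph_congr (fun i => absurd i.isLt (by omega)) (by omega) h

theorem le_szRevE_and_eq_iff {r : ℚ} {T : ℤ} {p : Prop} (hQ : EdgeDisjointCycles G)
    (hr : 4 * r = (e(G) * (2 * e(G) - 1) + #(cycleEdgeSets G) * (24 * e(G) - 60) + T : ℤ))
    (h : T ≤ ∑ i ∈ pieces G, pieceExcess G i ∧ (∑ i ∈ pieces G, pieceExcess G i = T ↔ p)) :
    r ≤ szRevE G ∧ (szRevE G = r ↔ p) := by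
  rw [szRevE_eq_sum_edgeWeight, hQ.sum_edgeWeight, eq_div_of_mul_eq four_ne_zero
    ((mul_comm r 4).trans hr), div_le_div_iff_of_pos_right four_pos, Int.cast_le,
    div_left_inj' four_ne_zero, Int.cast_inj, add_le_add_iff_left, add_right_inj]
  exact h

end Conclusion

/-- second-minimum edge revised Szeged index of cacti. For a cactus with `n`
vertices, `k` cycles and `m` edges (`m > 15`, `m > 4k`) which is not the bundle `C₁(n,k)`
of `k` quadrangles: if `m ≥ 20` then `Sz*ₑ(G) ≥ (2m² + 3m + 4k(6m−15) − 8)/4` with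
equality iff `G ≅ G*₁`; if `15 < m ≤ 19` then
`Sz*ₑ(G) ≥ (3m² − 19m + 4k(6m−15) + 45)/4` with equality iff `G` is the bundle of one
triangle and `k − 1` quadrangles. -/
theorem stmt19 {V : Type*} [Fintype V] (G : SimpleGraph V) (hG : IsCactus G)
    (n k m : ℕ) (hn : Fintype.card V = n) (hm : G.edgeFinset.card = m)
    (hkm : m = n - 1 + k) (h15 : 15 < m) (h4k : 4 * k < m)
    (hnot : ¬ Nonempty (G ≃g bundleGraph k (fun _ => 4) (n - 3 * k - 1))) :
    (20 ≤ m →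
      (2 * (m : ℚ) ^ 2 + 3 * m + 4 * k * (6 * (m : ℚ) - 15) - 8) / 4 ≤ szRevE G ∧
      (szRevE G = (2 * (m : ℚ) ^ 2 + 3 * m + 4 * k * (6 * (m : ℚ) - 15) - 8) / 4 ↔
        Nonempty (G ≃g GStar1 n k))) ∧
    (m ≤ 19 →
      (3 * (m : ℚ) ^ 2 - 19 * m + 4 * k * (6 * (m : ℚ) - 15) + 45) / 4 ≤ szRevE G ∧
      (szRevE G = (3 * (m : ℚ) ^ 2 - 19 * m + 4 * k * (6 * (m : ℚ) - 15) + 45) / 4 ↔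
        Nonempty (G ≃g bundleGraph k (fun i => if (i : ℕ) = 0 then 3 else 4)
          (n + k - 1 - (4 * k - 1))))) := by
  have hQ := hG.edgeDisjointCycles
  have hcard := hQ.card_edgeFinset_add_one hG.1
  have : 0 < Fintype.card V := Fintype.card_pos_iff.2 hG.1.nonempty
  obtain rfl : k = #(cycleEdgeSets G) := by omega
  subst hn hm
  exact ⟨fun h20 => le_szRevE_and_eq_iff hQ (by push_cast; ring)
      (sum_pieceExcess_eq_iff_of_twenty_le hG.1 hQ h20 h4k hnot),
    fun h19 => le_szRevE_and_eq_iff hQ (by push_cast; ring)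
      (sum_pieceExcess_eq_iff_of_le_nineteen hG.1 hQ h15 h19 h4k hnot)⟩
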